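/- arXiv:2411.07090 — 15 statements merged into one kernel-verified Lean document; each statement's English description precedes it below -/
import Mathlib

section
/- Let r ≥ 3 and let n ≥ (r-1)(2r+1)/2 be an integer. If H is an n-vertex T_r-free r-graph with minimum positive codegree δ⁺_{r-1}(H) > 2n/(2r+1), then H is r-partite. -/
variable {V : Type*} [Fintype V] [DecidableEq V]

/-- The (r-1)-shadow of an r-graph: all (r-1)-sets contained in some edge. -/
def sshadow (r : ℕ) (H : Finset (Finset V)) : Finset (Finset V) :=
  Finset.univ.filter (fun e => e.card = r - 1 ∧ ∃ E ∈ H, e ⊆ E)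

/-- The codegree neighborhood of a set `e`: vertices `v` with `e ∪ {v} ∈ H`. -/
def nbhd (H : Finset (Finset V)) (e : Finset V) : Finset V :=
  Finset.univ.filter (fun v => insert v e ∈ H)

/-- The neighborhood of a vertex. -/
def vnbhd (H : Finset (Finset V)) (v : V) : Finset V :=
  Finset.univ.filter (fun u => u ≠ v ∧ ∃ E ∈ H, u ∈ E ∧ v ∈ E)

/-- `H` is T_r-free. -/
def IsTrFree (r : ℕ) (H : Finset (Finset V)) : Prop :=
  ¬ ∃ (S W : Finset V) (a b : V),
      S.card = r - 1 ∧ W.card = r - 2 ∧ a ≠ b ∧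
      a ∉ S ∧ b ∉ S ∧ a ∉ W ∧ b ∉ W ∧ Disjoint S W ∧
      insert a S ∈ H ∧ insert b S ∈ H ∧ insert a (insert b W) ∈ H

/-- A set of vertices is independent. -/
def IsIndep (H : Finset (Finset V)) (I : Finset V) : Prop :=
  ∀ E ∈ H, (E ∩ I).card ≤ 1

/-- `H` is r-partite. -/
def IsRPartite (r : ℕ) (H : Finset (Finset V)) : Prop :=
  ∃ P : Fin r → Finset V, (∀ v : V, ∃! i, v ∈ P i) ∧ ∀ i, IsIndep H (P i)

/-- Minimum positive codegree. -/
noncomputable def minPosCodeg (r : ℕ) (H : Finset (Finset V)) : ℕ :=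
  sInf {k | ∃ e ∈ sshadow r H, (nbhd H e).card = k}

def NN {V : Type*} [Fintype V] [DecidableEq V] (H : Finset (Finset V)) (S : Finset V) : Finset V :=
  Finset.univ.filter (fun v => v ∉ S ∧ insert v S ∈ H)

def Eqv {V : Type*} [Fintype V] [DecidableEq V] (H : Finset (Finset V)) (u v : V) : Prop :=
  ∃ S, u ∈ NN H S ∧ v ∈ NN H S

def lnk {V : Type*} [Fintype V] [DecidableEq V] (H : Finset (Finset V)) (x : V) :
    Finset (Finset V) :=
  Finset.univ.filter (fun S => x ∉ S ∧ insert x S ∈ H)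

structure Good {V : Type*} [Fintype V] [DecidableEq V] (r D : ℕ) (U : Finset V)
    (H : Finset (Finset V)) : Prop where
  unif : ∀ E ∈ H, E.card = r
  sub : ∀ E ∈ H, E ⊆ U
  ind : ∀ S u v, u ∈ NN H S → v ∈ NN H S → ∀ E ∈ H, u ∈ E → v ∈ E → u = v
  deg : ∀ S u, u ∈ NN H S → D ≤ (NN H S).card
  big : 2 * U.card < (2 * r + 1) * D

theorem mem_NN {V : Type*} [Fintype V] [DecidableEq V] {H : Finset (Finset V)} {S : Finset V}
    {v : V} : v ∈ NN H S ↔ v ∉ S ∧ insert v S ∈ H := by simp [NN]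

theorem mem_lnk {V : Type*} [Fintype V] [DecidableEq V] {H : Finset (Finset V)} {S : Finset V}
    {x : V} : S ∈ lnk H x ↔ x ∉ S ∧ insert x S ∈ H := by simp [lnk]

theorem NN_erase {V : Type*} [Fintype V] [DecidableEq V] {H : Finset (Finset V)} {E : Finset V}
    (hE : E ∈ H) {e : V} (he : e ∈ E) : e ∈ NN H (E.erase e) := by
  rw [mem_NN]; simp [Finset.insert_erase he, hE]

theorem NN_lnk {V : Type*} [Fintype V] [DecidableEq V] {H : Finset (Finset V)} {S : Finset V}
    {x u : V} : u ∈ NN (lnk H x) S ↔ x ∉ S ∧ u ∈ NN H (insert x S) := by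
  simp only [mem_NN, mem_lnk, Finset.mem_insert, not_or, Finset.insert_comm x u S]
  constructor
  · rintro ⟨a, ⟨b, c⟩, d⟩; exact ⟨c, ⟨fun h => b h.symm, a⟩, d⟩
  · rintro ⟨c, ⟨b, a⟩, d⟩; exact ⟨a, ⟨fun h => b h.symm, c⟩, d⟩

theorem Eqv_lnk {V : Type*} [Fintype V] [DecidableEq V] {H : Finset (Finset V)}
    {x u v : V} (h : Eqv (lnk H x) u v) : Eqv H u v := by
  obtain ⟨S, h1, h2⟩ := h
  exact ⟨insert x S, (NN_lnk.1 h1).2, (NN_lnk.1 h2).2⟩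

theorem Good.NN_sub {V : Type*} [Fintype V] [DecidableEq V] {r D : ℕ} {U : Finset V}
    {H : Finset (Finset V)} (g : Good r D U H) (S : Finset V) : NN H S ⊆ U := by
  intro v hv
  exact g.sub _ (mem_NN.1 hv).2 (Finset.mem_insert_self _ _)

theorem Good.link {V : Type*} [Fintype V] [DecidableEq V] {r D : ℕ} {U : Finset V}
    {H : Finset (Finset V)} (g : Good (r + 1) D U H) {S0 : Finset V} {x : V} (hx : x ∈ NN H S0) :
    Good r D (U \ NN H S0) (lnk H x) where
  unif := by
    intro E hE
    obtain ⟨h1, h2⟩ := mem_lnk.1 hE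
    have := g.unif _ h2
    rw [Finset.card_insert_of_notMem h1] at this
    omega
  sub := by
    intro E hE y hy
    obtain ⟨h1, h2⟩ := mem_lnk.1 hE
    rw [Finset.mem_sdiff]
    refine ⟨g.sub _ h2 (Finset.mem_insert_of_mem hy), fun h => ?_⟩
    have := g.ind _ _ _ h hx _ h2 (Finset.mem_insert_of_mem hy) (Finset.mem_insert_self _ _)
    exact h1 (this ▸ hy)
  ind := by
    intro S u v hu hv E hE hue hve
    exact g.ind _ _ _ (NN_lnk.1 hu).2 (NN_lnk.1 hv).2 _ (mem_lnk.1 hE).2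
      (Finset.mem_insert_of_mem hue) (Finset.mem_insert_of_mem hve)
  deg := by
    intro S u hu
    have h := NN_lnk.1 hu
    have e : NN (lnk H x) S = NN H (insert x S) := by
      ext w; rw [NN_lnk]; exact ⟨fun a => a.2, fun a => ⟨h.1, a⟩⟩
    rw [e]; exact g.deg _ _ h.2
  big := by
    have h1 := Finset.card_sdiff_add_card_eq_card (g.NN_sub S0)
    have h2 := g.deg _ _ hx
    have h3 := g.big
    nlinarith

theorem Good.union {V : Type*} [Fintype V] [DecidableEq V] {r D : ℕ} {U : Finset V}
    {H : Finset (Finset V)} (g : Good r D U H) {E : Finset V} (hE : E ∈ H) :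
    r * D ≤ (E.biUnion fun e => NN H (E.erase e)).card := by
  rw [Finset.card_biUnion]
  · rw [← g.unif E hE, ← smul_eq_mul]
    exact Finset.card_nsmul_le_sum _ _ _ fun e he => g.deg _ e (NN_erase hE he)
  · intro e he f hf hef
    change Disjoint (NN H (E.erase e)) (NN H (E.erase f))
    rw [Finset.disjoint_left]
    intro x h1 h2
    have hfe : f ∈ E.erase e := Finset.mem_erase.2 ⟨hef.symm, hf⟩
    have := g.ind _ _ _ h2 (NN_erase hE hf) _ (mem_NN.1 h1).2 (Finset.mem_insert_self _ _)
      (Finset.mem_insert_of_mem hfe)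
    exact (mem_NN.1 h1).1 (this ▸ hfe)

theorem Good.classes {V : Type*} [Fintype V] [DecidableEq V] {r D : ℕ} {U : Finset V}
    {H : Finset (Finset V)} (g : Good r D U H)
    (tr : ∀ u v w, Eqv H u v → Eqv H v w → Eqv H u w)
    {E : Finset V} (hE : E ∈ H) {F : Finset V} (hF : F ∈ H) {v : V} (hv : v ∈ F) :
    ∃ e ∈ E, Eqv H v e := by
  by_contra! hc
  have hd : Disjoint (E.biUnion fun e => NN H (E.erase e)) (NN H (F.erase v)) := by
    rw [Finset.disjoint_left]
    intro x h1 h2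
    obtain ⟨e, he, hx⟩ := Finset.mem_biUnion.1 h1
    exact hc e he (tr _ x _ ⟨_, NN_erase hF hv, h2⟩ ⟨_, hx, NN_erase hE he⟩)
  have h1 := Finset.card_union_of_disjoint hd
  have h2 : ((E.biUnion fun e => NN H (E.erase e)) ∪ (NN H (F.erase v))).card ≤ U.card := by
    apply Finset.card_le_card
    apply Finset.union_subset _ (g.NN_sub _)
    exact Finset.biUnion_subset.2 fun e _ => g.NN_sub _
  have h3 := g.union hE
  have h4 := g.deg _ _ (NN_erase hF hv)
  have h5 := g.big
  nlinarith

theorem Good.trans {V : Type*} [Fintype V] [DecidableEq V] {r : ℕ} : ∀ {D : ℕ} {U : Finset V}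
    {H : Finset (Finset V)}, Good (r + 1) D U H →
    ∀ u v w, Eqv H u v → Eqv H v w → Eqv H u w := by
  induction r with
  | zero =>
    rintro D U H g u v w ⟨S, hu, hv⟩ ⟨T, hv', hw⟩
    have key : ∀ S z, z ∈ NN H S → S = ∅ := by
      intro S z hz
      have h := mem_NN.1 hz
      have := g.unif _ h.2
      rw [Finset.card_insert_of_notMem h.1] at this
      exact Finset.card_eq_zero.1 (by omega)
    rw [key _ _ hu] at hu
    rw [key _ _ hw] at hw
    exact ⟨_, hu, hw⟩
  | succ r ih =>
    rintro D U H g u v w ⟨S, hu, hv⟩ ⟨T, hv', hw⟩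
    by_contra hno
    obtain ⟨huS, hSu⟩ := mem_NN.1 hu
    obtain ⟨hvS, hSv⟩ := mem_NN.1 hv
    obtain ⟨hvT, hTv⟩ := mem_NN.1 hv'
    obtain ⟨hwT, hTw⟩ := mem_NN.1 hw
    have hSc := g.unif _ hSu
    rw [Finset.card_insert_of_notMem huS] at hSc
    obtain ⟨s, hs⟩ : S.Nonempty := Finset.card_pos.1 (by omega)
    have hsE : s ∈ insert v S := Finset.mem_insert_of_mem hs
    have hsv : s ≠ v := fun h => hvS (h ▸ hs)
    have hXv : v ∈ (insert v S).erase s := Finset.mem_erase.2 ⟨hsv.symm, Finset.mem_insert_self _ _⟩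
    have hA := g.union hSu
    have hB := g.union hTw
    have hC := g.deg _ _ (NN_erase hSv hsE)
    set A := ((insert u S).biUnion fun e => NN H ((insert u S).erase e)) with hAdef
    set B := ((insert w T).biUnion fun e => NN H ((insert w T).erase e)) with hBdef
    set C := NN H ((insert v S).erase s) with hCdef
    have hAU : A ⊆ U := Finset.biUnion_subset.2 fun e _ => g.NN_sub _
    have hBU : B ⊆ U := Finset.biUnion_subset.2 fun e _ => g.NN_sub _
    have hCU : C ⊆ U := g.NN_sub _
    have hd : Disjoint (A ∩ B) C := by
      rw [Finset.disjoint_left]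
      intro x hxAB hxC
      obtain ⟨hxA, hxB⟩ := Finset.mem_inter.1 hxAB
      obtain ⟨a, ha, hxa⟩ := Finset.mem_biUnion.1 hxA
      obtain ⟨t, ht, hxt⟩ := Finset.mem_biUnion.1 hxB
      obtain ⟨hxX, hX⟩ := mem_NN.1 hxC
      have hxv : x ≠ v := fun h => hxX (h ▸ hXv)
      have hau : a ≠ u := by
        rintro rfl
        rw [Finset.erase_insert huS] at hxa
        exact hxv (g.ind _ _ _ hxa hv _ hX (Finset.mem_insert_self _ _)
          (Finset.mem_insert_of_mem hXv))
      have htw : t ≠ w := by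
        rintro rfl
        rw [Finset.erase_insert hwT] at hxt
        exact hxv (g.ind _ _ _ hxt hv' _ hX (Finset.mem_insert_self _ _)
          (Finset.mem_insert_of_mem hXv))
      have haS : a ∈ S := (Finset.mem_insert.1 ha).resolve_left hau
      have has : a = s := by
        by_contra has
        have haX : a ∈ (insert v S).erase s :=
          Finset.mem_erase.2 ⟨has, Finset.mem_insert_of_mem haS⟩
        have := g.ind _ _ _ hxa (NN_erase hSu ha) _ hX (Finset.mem_insert_self _ _)
          (Finset.mem_insert_of_mem haX)
        exact hxX (this ▸ haX)
      subst has
      have g' := g.link hxC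
      have tr := ih g'
      have hXl : (insert v S).erase a ∈ lnk H x := mem_lnk.2 ⟨hxX, hX⟩
      have hYl : (insert u S).erase a ∈ lnk H x := mem_lnk.2 (mem_NN.1 hxa)
      have hTl : (insert w T).erase t ∈ lnk H x := mem_lnk.2 (mem_NN.1 hxt)
      obtain ⟨y, hy, hvy⟩ := g'.classes tr hTl hXl hXv
      have hyw : y = w := by
        by_contra hyw
        have hyT : y ∈ T := (Finset.mem_insert.1 (Finset.mem_of_mem_erase hy)).resolve_left hyw
        obtain ⟨R, h1, h2⟩ := Eqv_lnk hvy
        have := g.ind _ _ _ h1 h2 _ hTv (Finset.mem_insert_self _ _) (Finset.mem_insert_of_mem hyT)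
        exact hvT (this ▸ hyT)
      subst hyw
      have huv : Eqv (lnk H x) u v := by
        refine ⟨S.erase a, mem_NN.2 ⟨fun h => huS (Finset.mem_of_mem_erase h), ?_⟩,
          mem_NN.2 ⟨fun h => hvS (Finset.mem_of_mem_erase h), ?_⟩⟩
        · rwa [← Finset.erase_insert_of_ne hau.symm]
        · rwa [← Finset.erase_insert_of_ne hsv.symm]
      exact hno (Eqv_lnk (tr _ _ _ huv hvy))
    have h1 := Finset.card_union_of_disjoint hd
    have h2 := Finset.card_union_add_card_inter A B
    have h3 := Finset.card_le_card (Finset.union_subset hAU hBU)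
    have h4 := Finset.card_le_card
      (Finset.union_subset (Finset.inter_subset_left.trans hAU : A ∩ B ⊆ U) hCU)
    have h5 := g.big
    nlinarith

theorem ind_of_free {V : Type*} [Fintype V] [DecidableEq V] {r : ℕ} (hr : 3 ≤ r)
    {H : Finset (Finset V)} (hH : ∀ E ∈ H, E.card = r) (hfree : IsTrFree r H)
    (hdeg : ∀ S u, u ∈ NN H S → r ≤ (NN H S).card) {S : Finset V} {a b : V}
    (ha : a ∈ NN H S) (hb : b ∈ NN H S) (hab : a ≠ b) :
    ∀ k, ∀ E ∈ H, (E ∩ S).card = k → a ∈ E → b ∈ E → False := by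
  obtain ⟨haS, hSa⟩ := mem_NN.1 ha
  obtain ⟨hbS, hSb⟩ := mem_NN.1 hb
  have hSc := hH _ hSa
  rw [Finset.card_insert_of_notMem haS] at hSc
  intro k
  induction k with
  | zero =>
    intro E hE hk haE hbE
    have hbE' : b ∈ E.erase a := Finset.mem_erase.2 ⟨hab.symm, hbE⟩
    have hdis : Disjoint E S := Finset.disjoint_iff_inter_eq_empty.2 (Finset.card_eq_zero.1 hk)
    refine hfree ⟨S, (E.erase a).erase b, a, b, by omega, ?_, hab, haS, hbS, by simp, by simp, ?_,
      hSa, hSb, ?_⟩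
    · rw [Finset.card_erase_of_mem hbE', Finset.card_erase_of_mem haE, hH E hE]; omega
    · exact (hdis.mono_left ((Finset.erase_subset _ _).trans (Finset.erase_subset _ _))).symm
    · rwa [Finset.insert_erase hbE', Finset.insert_erase haE]
  | succ k ih =>
    intro E hE hk haE hbE
    obtain ⟨c, hc⟩ : (E ∩ S).Nonempty := Finset.card_pos.1 (by omega)
    obtain ⟨hcE, hcS⟩ := Finset.mem_inter.1 hc
    have hd := hdeg _ _ (NN_erase hE hcE)
    obtain ⟨y, hy, hyS⟩ := Finset.exists_mem_notMem_of_card_lt_card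
      (s := S) (t := NN H (E.erase c)) (by omega)
    have hac : a ≠ c := fun h => haS (h ▸ hcS)
    have hbc : b ≠ c := fun h => hbS (h ▸ hcS)
    refine ih _ (mem_NN.1 hy).2 ?_ (by simp [hac, haE]) (by simp [hbc, hbE])
    rw [Finset.insert_inter_of_notMem hyS, Finset.erase_inter, Finset.card_erase_of_mem hc, hk]
    rfl

/-- **Positive codegree Andrásfai–Erdős–Sós theorem for the generalized triangle.**
For `r ≥ 3` and `n ≥ (r-1)(2r+1)/2`, every `n`-vertex `T_r`-free `r`-graph with minimum
positive codegree greater than `2n/(2r+1)` is `r`-partite. -/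
theorem stmt0 {V : Type*} [Fintype V] [DecidableEq V] {r n : ℕ} (hr : 3 ≤ r)
    (hn : ((r : ℝ) - 1) * (2 * r + 1) / 2 ≤ n) (hV : Fintype.card V = n)
    {H : Finset (Finset V)} (hH : ∀ E ∈ H, E.card = r)
    (hfree : IsTrFree r H)
    (hdeg : ∀ e ∈ sshadow r H, 2 * (n : ℝ) / (2 * r + 1) < ((nbhd H e).card : ℝ)) :
    IsRPartite r H := by
  obtain ⟨q, rfl⟩ : ∃ q, r = q + 1 := ⟨r - 1, by omega⟩
  have hn' : q * (2 * (q + 1) + 1) ≤ 2 * n := by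
    have : ((q * (2 * (q + 1) + 1) : ℕ) : ℝ) ≤ ((2 * n : ℕ) : ℝ) := by
      push_cast at hn ⊢; linarith
    exact_mod_cast this
  have hdeg1 : ∀ S u, u ∈ NN H S → 2 * n / (2 * (q + 1) + 1) + 1 ≤ (NN H S).card := by
    intro S u hu
    obtain ⟨h1, h2⟩ := mem_NN.1 hu
    have hc := hH _ h2
    rw [Finset.card_insert_of_notMem h1] at hc
    have hs : S ∈ sshadow (q + 1) H := by
      simp only [sshadow, Finset.mem_filter, Finset.mem_univ, true_and]
      exact ⟨by omega, _, h2, Finset.subset_insert _ _⟩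
    have hN : nbhd H S = NN H S := by
      ext z
      simp only [nbhd, Finset.mem_filter, Finset.mem_univ, true_and, mem_NN]
      refine ⟨fun h => ⟨fun hz => ?_, h⟩, fun h => h.2⟩
      have := hH _ h
      rw [Finset.insert_eq_of_mem hz] at this
      omega
    have h := hdeg S hs
    rw [hN, div_lt_iff₀ (by positivity)] at h
    have h' : 2 * n < (NN H S).card * (2 * (q + 1) + 1) := by exact_mod_cast h
    exact Nat.succ_le_of_lt ((Nat.div_lt_iff_lt_mul (by omega)).2 h')
  have hq : q ≤ 2 * n / (2 * (q + 1) + 1) := (Nat.le_div_iff_mul_le (by omega)).2 hn'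
  have g : Good (q + 1) (2 * n / (2 * (q + 1) + 1) + 1) (Finset.univ : Finset V) H :=
    { unif := hH
      sub := fun E _ => Finset.subset_univ _
      ind := by
        intro S u v hu hv E hE h1 h2
        by_contra hne
        exact ind_of_free hr hH hfree (fun S u h => by have := hdeg1 S u h; omega)
          hu hv hne _ E hE rfl h1 h2
      deg := hdeg1
      big := by
        rw [Finset.card_univ, hV]
        exact Nat.lt_mul_div_succ _ (by omega) }
  have tr := g.trans
  have hcol : ∃ c : V → Fin (q + 1), ∀ F ∈ H, ∀ x ∈ F, ∀ y ∈ F, c x = c y → x = y := by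
    rcases H.eq_empty_or_nonempty with h0 | ⟨E, hE⟩
    · exact ⟨fun _ => 0, by simp [h0]⟩
    · have key : ∀ v : V, ∃ e : E, (∃ F ∈ H, v ∈ F) → Eqv H v e := by
        intro v
        by_cases h : ∃ F ∈ H, v ∈ F
        · obtain ⟨F, hF, hv⟩ := h
          obtain ⟨e, he, h⟩ := g.classes tr hE hF hv
          exact ⟨⟨e, he⟩, fun _ => h⟩
        · obtain ⟨e, he⟩ : E.Nonempty := Finset.card_pos.1 (by have := hH E hE; omega)
          exact ⟨⟨e, he⟩, fun h' => absurd h' h⟩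
      choose f hf using key
      let φ := E.equivFinOfCardEq (hH E hE)
      refine ⟨fun v => φ (f v), fun F hF x hx y hy hxy => ?_⟩
      have hxy' : f x = f y := φ.injective hxy
      have h1 := hf x ⟨F, hF, hx⟩
      obtain ⟨R, h2, h3⟩ := hf y ⟨F, hF, hy⟩
      rw [hxy'] at h1
      obtain ⟨R', h4, h5⟩ := tr _ _ _ h1 ⟨R, h3, h2⟩
      exact g.ind _ _ _ h4 h5 F hF hx hy
  obtain ⟨c, hc⟩ := hcol
  refine ⟨fun i => Finset.univ.filter fun v => c v = i, fun v => ⟨c v, by simp, by simp⟩, ?_⟩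
  intro i F hF
  rw [Finset.card_le_one]
  intro x hx y hy
  simp only [Finset.mem_inter, Finset.mem_filter, Finset.mem_univ, true_and] at hx hy
  exact hc F hF x hx.1 y hy.1 (hx.2.trans hy.2.symm)
end

section
/- Let r ≥ 3 be an integer. Every T_r-free r-graph H with δ⁺_{r-1}(H) ≥ r is also Σ_r-free; that is, there do not exist three edges A, B, C of H such that |A ∩ B| = r-1 and the symmetric difference A △ B is contained in C. -/
variable {V : Type*} [Fintype V] [DecidableEq V]

/-- Every `T_r`-free `r`-graph with minimum positive codegree at least `r` is `Σ_r`-free: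
there are no three edges `A, B, C` with `|A ∩ B| = r - 1` and `A △ B ⊆ C`. -/
theorem stmt2 {V : Type*} [Fintype V] [DecidableEq V] {r : ℕ} (hr : 3 ≤ r)
    {H : Finset (Finset V)} (hH : ∀ E ∈ H, E.card = r)
    (hfree : IsTrFree r H)
    (hdeg : ∀ e ∈ sshadow r H, r ≤ (nbhd H e).card) :
    ¬ ∃ A ∈ H, ∃ B ∈ H, ∃ C ∈ H, (A ∩ B).card = r - 1 ∧ symmDiff A B ⊆ C := by
  rintro ⟨A, hA, B, hB, C, hC, hcard, hsub⟩
  have hA1 : (A \ B).card = 1 := by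
    have := Finset.card_sdiff_add_card_inter A B
    have := hH A hA
    omega
  have hB1 : (B \ A).card = 1 := by
    have := Finset.card_sdiff_add_card_inter B A
    have := hH B hB
    rw [Finset.inter_comm] at hcard
    omega
  obtain ⟨a, ha⟩ := Finset.card_eq_one.1 hA1
  obtain ⟨b, hb⟩ := Finset.card_eq_one.1 hB1
  have ha' : a ∈ A ∧ a ∉ B := by
    rw [← Finset.mem_sdiff, ha]; simp
  have hb' : b ∈ B ∧ b ∉ A := by
    rw [← Finset.mem_sdiff, hb]; simp
  have hab : a ≠ b := by
    rintro rfl; exact ha'.2 hb'.1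
  have haC : a ∈ C := hsub (Finset.mem_symmDiff.2 (Or.inl ha'))
  have hbC : b ∈ C := hsub (Finset.mem_symmDiff.2 (Or.inr hb'))
  have haS : a ∉ A ∩ B := fun h => ha'.2 (Finset.mem_inter.1 h).2
  have hbS : b ∉ A ∩ B := fun h => hb'.2 (Finset.mem_inter.1 h).1
  have hAe : insert a (A ∩ B) = A := by
    rw [Finset.insert_eq, ← ha, Finset.sdiff_union_inter]
  have hBe : insert b (A ∩ B) = B := by
    rw [Finset.insert_eq, ← hb, Finset.inter_comm, Finset.sdiff_union_inter]
  have hAH : insert a (A ∩ B) ∈ H := by rw [hAe]; exact hA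
  have hBH : insert b (A ∩ B) ∈ H := by rw [hBe]; exact hB
  generalize A ∩ B = S at *
  have key : ∀ n : ℕ, ∀ C ∈ H, a ∈ C → b ∈ C → (C ∩ S).card = n → False := by
    intro n
    induction n with
    | zero =>
      intro C hC haC hbC h0
      have hd : Disjoint C S := by
        rw [Finset.disjoint_iff_inter_eq_empty]; exact Finset.card_eq_zero.1 h0
      have hb2 : b ∈ C.erase a := Finset.mem_erase.2 ⟨hab.symm, hbC⟩
      refine hfree ⟨S, (C.erase a).erase b, a, b, hcard, ?_, hab, haS, hbS, by simp, by simp,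
        ?_, hAH, hBH, ?_⟩
      · rw [Finset.card_erase_of_mem hb2, Finset.card_erase_of_mem haC, hH C hC]; omega
      · exact (hd.mono_left ((Finset.erase_subset _ _).trans (Finset.erase_subset _ _))).symm
      · rw [Finset.insert_erase hb2, Finset.insert_erase haC]; exact hC
    | succ n ih =>
      intro C hC haC hbC hn
      obtain ⟨v, hv⟩ := Finset.card_pos.1 (by omega : 0 < (C ∩ S).card)
      obtain ⟨hvC, hvS⟩ := Finset.mem_inter.1 hv
      have he : C.erase v ∈ sshadow r H := by
        simp only [sshadow, Finset.mem_filter, Finset.mem_univ, true_and]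
        exact ⟨by rw [Finset.card_erase_of_mem hvC, hH C hC], C, hC, Finset.erase_subset _ _⟩
      have hd := hdeg _ he
      obtain ⟨w, hw, hwS⟩ := Finset.exists_mem_notMem_of_card_lt_card
        (by omega : S.card < (nbhd H (C.erase v)).card)
      have hwH : insert w (C.erase v) ∈ H := by simpa [nbhd] using hw
      have hav : a ≠ v := by rintro rfl; exact haS hvS
      have hbv : b ≠ v := by rintro rfl; exact hbS hvS
      refine ih _ hwH (by simp [hav, haC]) (by simp [hbv, hbC]) ?_
      rw [Finset.insert_inter_of_notMem hwS, Finset.erase_inter, Finset.card_erase_of_mem hv, hn]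
      rfl
  exact key _ C hC haC hbC rfl
end

section
/- Let r ≥ 3, let H be a T_r-free r-graph with δ⁺_{r-1}(H) ≥ r, and let e = {u_1,…,u_r} ∈ H be an edge. Then for every i ∈ [r], the neighborhood of the (r-1)-set e \ {u_i} is disjoint from the neighborhood of the vertex u_i, i.e. N_H(e \ {u_i}) ∩ N_H(u_i) = ∅. -/
variable {V : Type*} [Fintype V] [DecidableEq V]

/-- Let `H` be a `T_r`-free `r`-graph with minimum positive codegree at least `r`, and let
`e ∈ H` be an edge. Then for every `u ∈ e`, the codegree neighborhood of `e \\ {u}` is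
disjoint from the neighborhood of the vertex `u`. -/
theorem stmt3 {V : Type*} [Fintype V] [DecidableEq V] {r : ℕ} (hr : 3 ≤ r)
    {H : Finset (Finset V)} (hH : ∀ E ∈ H, E.card = r)
    (hfree : IsTrFree r H)
    (hdeg : ∀ e ∈ sshadow r H, r ≤ (nbhd H e).card)
    {e : Finset V} (he : e ∈ H) {u : V} (hu : u ∈ e) :
    nbhd H (e.erase u) ∩ vnbhd H u = ∅ := by
  have key : ∀ (S : Finset V), S.card = r - 1 → ∀ v : V, u ∉ S → v ∉ S → v ≠ u →
      insert u S ∈ H → insert v S ∈ H →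
      ∀ n : ℕ, ∀ E ∈ H, v ∈ E → u ∈ E → (E ∩ S).card = n → False := by
    intro S hS v huS hvS hvu h1 h2 n
    induction n with
    | zero =>
      intro E hE hvE huE h0
      have hd : E ∩ S = ∅ := Finset.card_eq_zero.mp h0
      apply hfree
      refine ⟨S, (E.erase u).erase v, u, v, hS, ?_, hvu.symm, huS, hvS, by simp, by simp,
        ?_, h1, h2, ?_⟩
      · rw [Finset.card_erase_of_mem (Finset.mem_erase.mpr ⟨hvu, hvE⟩),
          Finset.card_erase_of_mem huE, hH E hE]
        omega
      · rw [Finset.disjoint_left]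
        intro x hx hx'
        have hxE : x ∈ E ∩ S :=
          Finset.mem_inter.mpr ⟨Finset.mem_of_mem_erase (Finset.mem_of_mem_erase hx'), hx⟩
        rw [hd] at hxE
        simp at hxE
      · rw [Finset.insert_erase (Finset.mem_erase.mpr ⟨hvu, hvE⟩), Finset.insert_erase huE]
        exact hE
    | succ n ih =>
      intro E hE hvE huE hn
      obtain ⟨w, hw⟩ : (E ∩ S).Nonempty := Finset.card_pos.mp (by omega)
      obtain ⟨hwE, hwS⟩ := Finset.mem_inter.mp hw
      have hsh : E.erase w ∈ sshadow r H := by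
        simp only [sshadow, Finset.mem_filter, Finset.mem_univ, true_and]
        exact ⟨by rw [Finset.card_erase_of_mem hwE, hH E hE], E, hE, Finset.erase_subset _ _⟩
      have hc := hdeg _ hsh
      obtain ⟨x, hx, hxS⟩ : ∃ x ∈ nbhd H (E.erase w), x ∉ S := by
        by_contra! hcon
        have := Finset.card_le_card (show nbhd H (E.erase w) ⊆ S from hcon)
        omega
      have hxH : insert x (E.erase w) ∈ H := by simpa [nbhd] using hx
      refine ih _ hxH ?_ ?_ ?_
      · exact Finset.mem_insert_of_mem
          (Finset.mem_erase.mpr ⟨fun h => hvS (h ▸ hwS), hvE⟩)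
      · exact Finset.mem_insert_of_mem
          (Finset.mem_erase.mpr ⟨fun h => huS (h ▸ hwS), huE⟩)
      · rw [Finset.insert_inter_of_notMem hxS, Finset.erase_inter,
          Finset.card_erase_of_mem hw, hn]
        rfl
  rw [Finset.eq_empty_iff_forall_notMem]
  intro v hv
  simp only [nbhd, vnbhd, Finset.mem_inter, Finset.mem_filter, Finset.mem_univ, true_and] at hv
  obtain ⟨h2, hvu, E, hE, hvE, huE⟩ := hv
  have hS : (e.erase u).card = r - 1 := by rw [Finset.card_erase_of_mem hu, hH e he]
  refine key (e.erase u) hS v (by simp) ?_ hvu ?_ h2 _ E hE hvE huE rfl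
  · intro h
    have := hH _ h2
    rw [Finset.insert_eq_of_mem h] at this
    omega
  · rw [Finset.insert_erase hu]
    exact he
end

section
/- Let r ≥ 3, let H be a T_r-free r-graph with δ⁺_{r-1}(H) ≥ r, and let e = {u_1,…,u_r} ∈ H be an edge. Then the r sets N_H(e \ {u_1}), …, N_H(e \ {u_r}) are pairwise disjoint. -/
variable {V : Type*} [Fintype V] [DecidableEq V]

theorem move_aux {V : Type*} [Fintype V] [DecidableEq V] {r : ℕ} (hr : 3 ≤ r)
    {H : Finset (Finset V)} (hH : ∀ E ∈ H, E.card = r)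
    (hdeg : ∀ e ∈ sshadow r H, r ≤ (nbhd H e).card)
    (S : Finset V) (hS : S.card < r) (a b : V) (haS : a ∉ S) (hbS : b ∉ S) (n : ℕ) :
    ∀ f ∈ H, a ∈ f → b ∈ f → (f ∩ S).card = n →
      ∃ g ∈ H, a ∈ g ∧ b ∈ g ∧ Disjoint S g := by
  induction n with
  | zero =>
    intro f hf ha hb h0
    refine ⟨f, hf, ha, hb, ?_⟩
    rw [Finset.card_eq_zero] at h0
    exact (Finset.disjoint_iff_inter_eq_empty.mpr h0).symm
  | succ n ih =>
    intro f hf ha hb hn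
    obtain ⟨v, hv⟩ := Finset.card_pos.mp (by omega : 0 < (f ∩ S).card)
    have hv' := Finset.mem_inter.mp hv
    have hsh : f.erase v ∈ sshadow r H := by
      simp only [sshadow, Finset.mem_filter, Finset.mem_univ, true_and]
      refine ⟨?_, f, hf, Finset.erase_subset _ _⟩
      rw [Finset.card_erase_of_mem hv'.1, hH f hf]
    have hd := hdeg _ hsh
    obtain ⟨w, hw, hwS⟩ := Finset.exists_mem_notMem_of_card_lt_card (lt_of_lt_of_le hS hd)
    simp only [nbhd, Finset.mem_filter, Finset.mem_univ, true_and] at hw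
    refine ih _ hw ?_ ?_ ?_
    · exact Finset.mem_insert_of_mem (Finset.mem_erase.mpr ⟨fun h => haS (h ▸ hv'.2), ha⟩)
    · exact Finset.mem_insert_of_mem (Finset.mem_erase.mpr ⟨fun h => hbS (h ▸ hv'.2), hb⟩)
    · rw [Finset.insert_inter_of_notMem hwS, Finset.erase_inter, Finset.card_erase_of_mem hv, hn]
      rfl

/-- Let `H` be a `T_r`-free `r`-graph with minimum positive codegree at least `r`, and let
`e ∈ H` be an edge. Then the neighborhoods `N_H(e \\ {u})`, for `u ∈ e`, are pairwise
disjoint. -/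
theorem stmt4 {V : Type*} [Fintype V] [DecidableEq V] {r : ℕ} (hr : 3 ≤ r)
    {H : Finset (Finset V)} (hH : ∀ E ∈ H, E.card = r)
    (hfree : IsTrFree r H)
    (hdeg : ∀ e ∈ sshadow r H, r ≤ (nbhd H e).card)
    {e : Finset V} (he : e ∈ H) :
    ∀ u ∈ e, ∀ u' ∈ e, u ≠ u' →
      Disjoint (nbhd H (e.erase u)) (nbhd H (e.erase u')) := by
  intro u hu u' hu' huu
  rw [Finset.disjoint_left]
  intro x hx hx'
  simp only [nbhd, Finset.mem_filter, Finset.mem_univ, true_and] at hx hx'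
  have hc := hH e he
  have hxS : x ∉ e.erase u := by
    intro h
    have h1 := hH _ hx
    rw [Finset.insert_eq_of_mem h, Finset.card_erase_of_mem hu] at h1
    omega
  have hxS' : x ∉ e.erase u' := by
    intro h
    have h1 := hH _ hx'
    rw [Finset.insert_eq_of_mem h, Finset.card_erase_of_mem hu'] at h1
    omega
  have hux : u ≠ x := by
    rintro rfl
    exact hxS' (Finset.mem_erase.mpr ⟨huu, hu⟩)
  have hSc : (e.erase u).card = r - 1 := by rw [Finset.card_erase_of_mem hu, hc]
  obtain ⟨g, hg, hug, hxg, hdis⟩ := move_aux hr hH hdeg (e.erase u) (by omega) u x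
    (Finset.notMem_erase _ _) hxS _ _ hx'
    (Finset.mem_insert_of_mem (Finset.mem_erase.mpr ⟨huu, hu⟩)) (Finset.mem_insert_self _ _) rfl
  have hxg' : x ∈ g.erase u := Finset.mem_erase.mpr ⟨hux.symm, hxg⟩
  refine hfree ⟨e.erase u, (g.erase u).erase x, u, x, hSc, ?_, hux, Finset.notMem_erase _ _, hxS,
    ?_, Finset.notMem_erase _ _, ?_, ?_, hx, ?_⟩
  · rw [Finset.card_erase_of_mem hxg', Finset.card_erase_of_mem hug, hH g hg]
    omega
  · simp
  · exact hdis.mono_right ((Finset.erase_subset _ _).trans (Finset.erase_subset _ _))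
  · rwa [Finset.insert_erase hu]
  · rwa [Finset.insert_erase hxg', Finset.insert_erase hug]
end

section
/- Let r ≥ 3, let H be a T_r-free r-graph with δ⁺_{r-1}(H) ≥ r, and let e = {u_1,…,u_r} ∈ H be an edge. Then for every i ∈ [r], the set N_H(e \ {u_i}) is independent in H, i.e. every edge of H contains at most one vertex of N_H(e \ {u_i}). -/
variable {V : Type*} [Fintype V] [DecidableEq V]

theorem stmt5_aux {V : Type*} [Fintype V] [DecidableEq V] {r : ℕ} (hr : 3 ≤ r)
    {H : Finset (Finset V)} (hH : ∀ E ∈ H, E.card = r)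
    (hfree : IsTrFree r H)
    (hdeg : ∀ e ∈ sshadow r H, r ≤ (nbhd H e).card)
    (S : Finset V) (hS : S.card = r - 1) (a b : V) (hab : a ≠ b) (haS : a ∉ S) (hbS : b ∉ S)
    (ha : insert a S ∈ H) (hb : insert b S ∈ H) :
    ∀ n : ℕ, ∀ E ∈ H, a ∈ E → b ∈ E → (E ∩ S).card = n → False := by
  intro n
  induction n with
  | zero =>
    intro E hE haE hbE hn
    have hdis : E ∩ S = ∅ := Finset.card_eq_zero.mp hn
    have hbE' : b ∈ E.erase a := Finset.mem_erase.mpr ⟨hab.symm, hbE⟩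
    refine hfree ⟨S, (E.erase a).erase b, a, b, hS, ?_, hab, haS, hbS, by simp, by simp, ?_,
      ha, hb, ?_⟩
    · rw [Finset.card_erase_of_mem hbE', Finset.card_erase_of_mem haE, hH E hE]
      omega
    · rw [Finset.disjoint_left]
      intro x hx hx'
      have h1 : x ∈ E ∩ S :=
        Finset.mem_inter.mpr ⟨Finset.mem_of_mem_erase (Finset.mem_of_mem_erase hx'), hx⟩
      rw [hdis] at h1
      simp at h1
    · rw [Finset.insert_erase hbE', Finset.insert_erase haE]
      exact hE
  | succ n ih =>
    intro E hE haE hbE hn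
    obtain ⟨w, hw⟩ : (E ∩ S).Nonempty := Finset.card_pos.mp (by omega)
    obtain ⟨hwE, hwS⟩ := Finset.mem_inter.mp hw
    have hsh : E.erase w ∈ sshadow r H := by
      simp only [sshadow, Finset.mem_filter, Finset.mem_univ, true_and]
      exact ⟨by rw [Finset.card_erase_of_mem hwE, hH E hE], E, hE, Finset.erase_subset _ _⟩
    have hd := hdeg _ hsh
    obtain ⟨x, hx, hxS⟩ : ∃ x ∈ nbhd H (E.erase w), x ∉ S :=
      Finset.exists_mem_notMem_of_card_lt_card (by omega)
    have hxH : insert x (E.erase w) ∈ H := by simpa [nbhd] using hx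
    have haw : a ≠ w := fun h => haS (h ▸ hwS)
    have hbw : b ≠ w := fun h => hbS (h ▸ hwS)
    refine ih _ hxH (by simp [haw, haE]) (by simp [hbw, hbE]) ?_
    rw [Finset.insert_inter_of_notMem hxS, Finset.erase_inter, Finset.card_erase_of_mem hw, hn]
    omega

/-- Let `H` be a `T_r`-free `r`-graph with minimum positive codegree at least `r`, and let
`e ∈ H` be an edge. Then for every `u ∈ e`, the set `N_H(e \\ {u})` is independent in `H`. -/
theorem stmt5 {V : Type*} [Fintype V] [DecidableEq V] {r : ℕ} (hr : 3 ≤ r)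
    {H : Finset (Finset V)} (hH : ∀ E ∈ H, E.card = r)
    (hfree : IsTrFree r H)
    (hdeg : ∀ e ∈ sshadow r H, r ≤ (nbhd H e).card)
    {e : Finset V} (he : e ∈ H) :
    ∀ u ∈ e, IsIndep H (nbhd H (e.erase u)) := by
  intro u hu E hE
  by_contra hcon
  obtain ⟨a, ha, b, hb, hab⟩ := Finset.one_lt_card.mp (not_le.mp hcon)
  have hS : (e.erase u).card = r - 1 := by rw [Finset.card_erase_of_mem hu, hH e he]
  have key : ∀ c, insert c (e.erase u) ∈ H → c ∉ e.erase u := by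
    intro c hc hmem
    have := hH _ hc
    rw [Finset.insert_eq_of_mem hmem] at this
    omega
  rw [Finset.mem_inter] at ha hb
  have ha2 : insert a (e.erase u) ∈ H := (Finset.mem_filter.mp ha.2).2
  have hb2 : insert b (e.erase u) ∈ H := (Finset.mem_filter.mp hb.2).2
  exact stmt5_aux hr hH hfree hdeg _ hS a b hab (key a ha2) (key b hb2) ha2 hb2 _ E hE ha.1 hb.1 rfl
end

section
/- Let r ≥ 3 and n ≥ (r-1)(2r+1)/2, and let H be an n-vertex T_r-free r-graph with at least one edge and δ⁺_{r-1}(H) > 2n/(2r+1). Then there exist r pairwise disjoint independent sets V_1, …, V_r in the vertex set of H such that min{|V_1|, …, |V_r|} > 2n/(2r+1). -/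
variable {V : Type*} [Fintype V] [DecidableEq V]

theorem mem_nbhd_not_mem {V : Type*} [Fintype V] [DecidableEq V] {r : ℕ} (hr : 3 ≤ r)
    {H : Finset (Finset V)} (hH : ∀ E ∈ H, E.card = r) {S : Finset V} (hS : S.card = r - 1)
    {a : V} (ha : a ∈ nbhd H S) : a ∉ S ∧ insert a S ∈ H := by
  simp only [nbhd, Finset.mem_filter, Finset.mem_univ, true_and] at ha
  refine ⟨fun h => ?_, ha⟩
  rw [Finset.insert_eq_of_mem h] at ha
  have := hH _ ha
  omega

theorem erase_mem_sshadow {V : Type*} [Fintype V] [DecidableEq V] {r : ℕ}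
    {H : Finset (Finset V)} (hH : ∀ E ∈ H, E.card = r) {F : Finset V} (hF : F ∈ H)
    {w : V} (hw : w ∈ F) : F.erase w ∈ sshadow r H := by
  simp only [sshadow, Finset.mem_filter, Finset.mem_univ, true_and]
  exact ⟨by rw [Finset.card_erase_of_mem hw, hH F hF], F, hF, Finset.erase_subset _ _⟩

theorem nbhd_no_edge {V : Type*} [Fintype V] [DecidableEq V] {r : ℕ} (hr : 3 ≤ r)
    {H : Finset (Finset V)} (hH : ∀ E ∈ H, E.card = r)
    (hfree : IsTrFree r H) (hdeg : ∀ e ∈ sshadow r H, r - 1 < (nbhd H e).card)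
    {S : Finset V} (hS : S.card = r - 1) {a b : V} (hab : a ≠ b)
    (ha : a ∈ nbhd H S) (hb : b ∈ nbhd H S) :
    ∀ k, ∀ F ∈ H, a ∈ F → b ∈ F → (F ∩ S).card = k → False := by
  obtain ⟨haS, haH⟩ := mem_nbhd_not_mem hr hH hS ha
  obtain ⟨hbS, hbH⟩ := mem_nbhd_not_mem hr hH hS hb
  intro k
  induction k with
  | zero =>
    intro F hF haF hbF h0
    rw [Finset.card_eq_zero] at h0
    have hbF' : b ∈ F.erase a := Finset.mem_erase.2 ⟨hab.symm, hbF⟩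
    refine hfree ⟨S, (F.erase a).erase b, a, b, hS, ?_, hab, haS, hbS, by simp, by simp,
      ?_, haH, hbH, ?_⟩
    · rw [Finset.card_erase_of_mem hbF', Finset.card_erase_of_mem haF, hH F hF]
      omega
    · rw [Finset.disjoint_left]
      intro x hx hx'
      have : x ∈ F ∩ S :=
        Finset.mem_inter.2 ⟨Finset.mem_of_mem_erase (Finset.mem_of_mem_erase hx'), hx⟩
      rw [h0] at this
      simp at this
    · rw [Finset.insert_erase hbF', Finset.insert_erase haF]
      exact hF
  | succ k ih =>
    intro F hF haF hbF hk
    obtain ⟨w, hw⟩ : (F ∩ S).Nonempty := by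
      rw [← Finset.card_pos]; omega
    obtain ⟨hwF, hwS⟩ := Finset.mem_inter.1 hw
    have hsh := erase_mem_sshadow hH hF hwF
    obtain ⟨v, hv, hvS⟩ : ∃ v ∈ nbhd H (F.erase w), v ∉ S :=
      Finset.exists_mem_notMem_of_card_lt_card (by rw [hS]; exact hdeg _ hsh)
    have hvH : insert v (F.erase w) ∈ H := by
      simpa only [nbhd, Finset.mem_filter, Finset.mem_univ, true_and] using hv
    refine ih _ hvH ?_ ?_ ?_
    · exact Finset.mem_insert_of_mem
        (Finset.mem_erase.2 ⟨fun h => haS (h ▸ hwS), haF⟩)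
    · exact Finset.mem_insert_of_mem
        (Finset.mem_erase.2 ⟨fun h => hbS (h ▸ hwS), hbF⟩)
    · rw [Finset.insert_inter_of_notMem hvS, Finset.erase_inter,
        Finset.card_erase_of_mem hw, hk]
      rfl

/-- For `r ≥ 3` and `n ≥ (r-1)(2r+1)/2`, every `n`-vertex `T_r`-free `r`-graph with at least
one edge and minimum positive codegree greater than `2n/(2r+1)` contains `r` pairwise
disjoint independent sets, each of size greater than `2n/(2r+1)`. -/
theorem stmt6 {V : Type*} [Fintype V] [DecidableEq V] {r n : ℕ} (hr : 3 ≤ r)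
    (hn : ((r : ℝ) - 1) * (2 * r + 1) / 2 ≤ n) (hV : Fintype.card V = n)
    {H : Finset (Finset V)} (hH : ∀ E ∈ H, E.card = r)
    (hfree : IsTrFree r H) (hne : H.Nonempty)
    (hdeg : ∀ e ∈ sshadow r H, 2 * (n : ℝ) / (2 * r + 1) < ((nbhd H e).card : ℝ)) :
    ∃ P : Fin r → Finset V,
      (∀ i j, i ≠ j → Disjoint (P i) (P j)) ∧
      (∀ i, IsIndep H (P i)) ∧
      (∀ i, 2 * (n : ℝ) / (2 * r + 1) < ((P i).card : ℝ)) := by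
  have hdeg' : ∀ e ∈ sshadow r H, r - 1 < (nbhd H e).card := by
    intro e he
    have h1 := hdeg e he
    have h2 : (r : ℝ) - 1 ≤ 2 * (n : ℝ) / (2 * r + 1) := by
      rw [le_div_iff₀ (by positivity)]
      linarith
    have h3 : (r : ℝ) < ((nbhd H e).card : ℝ) + 1 := by linarith
    have h4 : r < (nbhd H e).card + 1 := by exact_mod_cast h3
    omega
  obtain ⟨E, hE⟩ := hne
  have key : ∀ u ∈ E, ∀ a b, a ≠ b → a ∈ nbhd H (E.erase u) → b ∈ nbhd H (E.erase u) →
      ∀ F ∈ H, a ∈ F → b ∈ F → False := by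
    intro u hu a b hab ha hb F hF haF hbF
    exact nbhd_no_edge hr hH hfree hdeg'
      (by rw [Finset.card_erase_of_mem hu, hH E hE]) hab ha hb _ F hF haF hbF rfl
  let f := (E.equivFinOfCardEq (hH E hE)).symm
  refine ⟨fun i => nbhd H (E.erase (f i)), ?_, ?_, ?_⟩
  · intro i j hij
    have hne : (f i : V) ≠ f j := fun h => hij (f.injective (Subtype.ext h))
    rw [Finset.disjoint_left]
    intro x hxi hxj
    have hi := (f i).2
    have hmem : (f i : V) ∈ E.erase (f j) := Finset.mem_erase.2 ⟨hne, hi⟩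
    obtain ⟨hx, hxH⟩ := mem_nbhd_not_mem hr hH
      (by rw [Finset.card_erase_of_mem (f j).2, hH E hE]) hxj
    refine key (f i) hi x (f i) (fun h => hx (h ▸ hmem)) hxi ?_ _ hxH
      (Finset.mem_insert_self _ _) (Finset.mem_insert_of_mem hmem)
    simp only [nbhd, Finset.mem_filter, Finset.mem_univ, true_and]
    rw [Finset.insert_erase hi]
    exact hE
  · intro i F hF
    by_contra hc
    push Not at hc
    obtain ⟨a, ha, b, hb, hab⟩ := Finset.one_lt_card.1 hc
    rw [Finset.mem_inter] at ha hb
    exact key (f i) (f i).2 a b hab ha.2 hb.2 F hF ha.1 hb.1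
  · intro i
    exact hdeg _ (erase_mem_sshadow hH hE (f i).2)
end

section
/- Let r ≥ 3 and n ≥ (r-1)(2r+1)/2, and let H be an n-vertex T_r-free r-graph with δ⁺_{r-1}(H) > 2n/(2r+1). Then for every vertex v of H that lies in at least one edge, the neighborhood of v satisfies |N_H(v)| > 2(r-1)n/(2r+1). -/
variable {V : Type*} [Fintype V] [DecidableEq V]

theorem nbhd_indep_aux {V : Type*} [Fintype V] [DecidableEq V] {r : ℕ} (hr : 3 ≤ r)
    {H : Finset (Finset V)} (hH : ∀ E ∈ H, E.card = r) (hfree : IsTrFree r H)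
    (hd : ∀ e ∈ sshadow r H, r ≤ (nbhd H e).card)
    {e : Finset V} (he : e.card = r - 1) {a b : V} (hab : a ≠ b)
    (ha : insert a e ∈ H) (hb : insert b e ∈ H) :
    ∀ k : ℕ, ∀ E ∈ H, a ∈ E → b ∈ E → (E ∩ e).card = k → False := by
  have hnot : ∀ x, insert x e ∈ H → x ∉ e := by
    intro x hx hxe
    have := hH _ hx
    rw [Finset.insert_eq_of_mem hxe] at this
    omega
  have hae := hnot a ha
  have hbe := hnot b hb
  intro k
  induction k with
  | zero =>
    intro E hE haE hbE hk
    rw [Finset.card_eq_zero] at hk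
    apply hfree
    have hbE' : b ∈ E.erase a := Finset.mem_erase.2 ⟨hab.symm, hbE⟩
    refine ⟨e, (E.erase a).erase b, a, b, he, ?_, hab, hae, hbe, by simp, by simp, ?_, ha, hb, ?_⟩
    · rw [Finset.card_erase_of_mem hbE', Finset.card_erase_of_mem haE, hH E hE]
      omega
    · rw [Finset.disjoint_left]
      intro x hx hx'
      have : x ∈ E ∩ e := Finset.mem_inter.2
        ⟨Finset.mem_of_mem_erase (Finset.mem_of_mem_erase hx'), hx⟩
      rw [hk] at this
      simp at this
    · rw [Finset.insert_erase hbE', Finset.insert_erase haE]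
      exact hE
  | succ k ih =>
    intro E hE haE hbE hk
    obtain ⟨x, hx⟩ : (E ∩ e).Nonempty := by
      rw [← Finset.card_pos]; omega
    obtain ⟨hxE, hxe⟩ := Finset.mem_inter.1 hx
    have hsh : E.erase x ∈ sshadow r H := by
      simp only [sshadow, Finset.mem_filter, Finset.mem_univ, true_and]
      exact ⟨by rw [Finset.card_erase_of_mem hxE, hH E hE], E, hE, Finset.erase_subset _ _⟩
    have hc := hd _ hsh
    obtain ⟨y, hy, hye⟩ : ∃ y ∈ nbhd H (E.erase x), y ∉ e := by
      by_contra hcon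
      push Not at hcon
      have := Finset.card_le_card (show nbhd H (E.erase x) ⊆ e from hcon)
      omega
    simp only [nbhd, Finset.mem_filter, Finset.mem_univ, true_and] at hy
    have hax : a ≠ x := fun h => hae (h ▸ hxe)
    have hbx : b ≠ x := fun h => hbe (h ▸ hxe)
    refine ih _ hy (by simp [hax, haE]) (by simp [hbx, hbE]) ?_
    rw [Finset.insert_inter_of_notMem hye, Finset.erase_inter, Finset.card_erase_of_mem hx, hk]
    rfl

/-- For `r ≥ 3` and `n ≥ (r-1)(2r+1)/2`, in every `n`-vertex `T_r`-free `r`-graph with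
minimum positive codegree greater than `2n/(2r+1)`, every non-isolated vertex `v` satisfies
`|N_H(v)| > 2(r-1)n/(2r+1)`. -/
theorem stmt7 {V : Type*} [Fintype V] [DecidableEq V] {r n : ℕ} (hr : 3 ≤ r)
    (hn : ((r : ℝ) - 1) * (2 * r + 1) / 2 ≤ n) (hV : Fintype.card V = n)
    {H : Finset (Finset V)} (hH : ∀ E ∈ H, E.card = r)
    (hfree : IsTrFree r H)
    (hdeg : ∀ e ∈ sshadow r H, 2 * (n : ℝ) / (2 * r + 1) < ((nbhd H e).card : ℝ)) :
    ∀ v : V, (∃ E ∈ H, v ∈ E) →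
      2 * ((r : ℝ) - 1) * n / (2 * r + 1) < ((vnbhd H v).card : ℝ) := by
  intro v ⟨E, hE, hvE⟩
  have hr' : (3 : ℝ) ≤ r := by exact_mod_cast hr
  have hd : ∀ e ∈ sshadow r H, r ≤ (nbhd H e).card := by
    intro e he
    have h1 := hdeg e he
    have h2 : (r : ℝ) - 1 ≤ 2 * (n : ℝ) / (2 * r + 1) := by
      rw [le_div_iff₀ (by positivity)]
      linarith
    have h3 : (r : ℝ) < ((nbhd H e).card + 1 : ℕ) := by
      push_cast
      linarith
    have h4 : r < (nbhd H e).card + 1 := by exact_mod_cast h3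
    omega
  have hcard : ∀ u ∈ E, (E.erase u).card = r - 1 := fun u hu => by
    rw [Finset.card_erase_of_mem hu, hH E hE]
  have hsub : (E.erase v).biUnion (fun u => nbhd H (E.erase u)) ⊆ vnbhd H v := by
    intro w hw
    simp only [Finset.mem_biUnion, nbhd, Finset.mem_filter, Finset.mem_univ, true_and] at hw
    obtain ⟨u, hu, hw⟩ := hw
    obtain ⟨huv, huE⟩ := Finset.mem_erase.1 hu
    have hv' : v ∈ E.erase u := Finset.mem_erase.2 ⟨huv.symm, hvE⟩
    simp only [vnbhd, Finset.mem_filter, Finset.mem_univ, true_and]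
    refine ⟨?_, _, hw, Finset.mem_insert_self _ _, Finset.mem_insert_of_mem hv'⟩
    rintro rfl
    have h1 := hH _ hw
    rw [Finset.insert_eq_of_mem hv', hcard u huE] at h1
    omega
  have hdisj : ((E.erase v : Finset V) : Set V).PairwiseDisjoint
      (fun u => nbhd H (E.erase u)) := by
    intro i hi j hj hij
    have hiE : i ∈ E := Finset.mem_of_mem_erase (Finset.mem_coe.1 hi)
    have hjE : j ∈ E := Finset.mem_of_mem_erase (Finset.mem_coe.1 hj)
    change Disjoint (nbhd H (E.erase i)) (nbhd H (E.erase j))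
    rw [Finset.disjoint_left]
    intro w hwi hwj
    simp only [nbhd, Finset.mem_filter, Finset.mem_univ, true_and] at hwi hwj
    have hji : j ∈ E.erase i := Finset.mem_erase.2 ⟨hij.symm, hjE⟩
    have hwj' : w ≠ j := by
      rintro rfl
      have h1 := hH _ hwi
      rw [Finset.insert_eq_of_mem hji, hcard i hiE] at h1
      omega
    exact nbhd_indep_aux hr hH hfree hd (hcard j hjE) hwj' hwj
      (by rw [Finset.insert_erase hjE]; exact hE) _ _ hwi (Finset.mem_insert_self _ _)
      (Finset.mem_insert_of_mem hji) rfl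
  have hle := Finset.card_le_card hsub
  rw [Finset.card_biUnion hdisj] at hle
  have hne : (E.erase v).Nonempty := by
    rw [← Finset.card_pos, hcard v hvE]; omega
  have hlt : ∑ u ∈ E.erase v, 2 * (n : ℝ) / (2 * r + 1)
      < ∑ u ∈ E.erase v, ((nbhd H (E.erase u)).card : ℝ) := by
    apply Finset.sum_lt_sum_of_nonempty hne
    intro u hu
    apply hdeg
    have huE := Finset.mem_of_mem_erase hu
    simp only [sshadow, Finset.mem_filter, Finset.mem_univ, true_and]
    exact ⟨hcard u huE, E, hE, Finset.erase_subset _ _⟩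
  rw [Finset.sum_const, hcard v hvE, nsmul_eq_mul, Nat.cast_sub (by omega), Nat.cast_one] at hlt
  have hle' : ∑ u ∈ E.erase v, ((nbhd H (E.erase u)).card : ℝ) ≤ ((vnbhd H v).card : ℝ) := by
    exact_mod_cast hle
  calc 2 * ((r : ℝ) - 1) * n / (2 * r + 1) = ((r : ℝ) - 1) * (2 * (n : ℝ) / (2 * r + 1)) := by ring
    _ < _ := lt_of_lt_of_le hlt hle'
end

section
/- Let r ≥ 3 and n ≥ (r-1)(2r+1)/2, let H be an n-vertex T_r-free r-graph with δ⁺_{r-1}(H) > 2n/(2r+1), and let V_1, …, V_r be pairwise disjoint independent sets in H, each of size greater than 2n/(2r+1). Let Z = V(H) \ (V_1 ∪ ⋯ ∪ V_r), let v ∈ Z, and for each i ∈ [r] let L_i be the set of (r-1)-sets e in the link of v (i.e. e ∪ {v} ∈ H) such that |e ∩ V_j| = 1 for every j ∈ [r] \ {i}. Then at most one of the sets L_1, …, L_r is nonempty. -/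
variable {V : Type*} [Fintype V] [DecidableEq V]

theorem aux_not_mem {V : Type*} [Fintype V] [DecidableEq V] {r : ℕ} (hr : 3 ≤ r)
    {H : Finset (Finset V)} (hH : ∀ E ∈ H, E.card = r) {e : Finset V} (he : e.card = r - 1)
    {w : V} (hw : insert w e ∈ H) : w ∉ e := by
  intro h
  have := hH _ hw
  rw [Finset.insert_eq_of_mem h] at this
  omega

theorem aux_erase {V : Type*} [Fintype V] [DecidableEq V] {r : ℕ}
    {H : Finset (Finset V)} (hH : ∀ E ∈ H, E.card = r) {E : Finset V} (hE : E ∈ H)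
    {w : V} (hw : w ∈ E) : (E.erase w).card = r - 1 ∧ E.erase w ∈ sshadow r H := by
  have h1 : (E.erase w).card = r - 1 := by rw [Finset.card_erase_of_mem hw, hH E hE]
  refine ⟨h1, ?_⟩
  simp only [sshadow, Finset.mem_filter, Finset.mem_univ, true_and]
  exact ⟨h1, E, hE, Finset.erase_subset _ _⟩

theorem aux_indep {V : Type*} [Fintype V] [DecidableEq V] {r : ℕ} (hr : 3 ≤ r)
    {H : Finset (Finset V)} (hH : ∀ E ∈ H, E.card = r) (hfree : IsTrFree r H)
    (hdeg : ∀ e ∈ sshadow r H, r - 1 < (nbhd H e).card)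
    {e : Finset V} (he : e.card = r - 1) {a b : V} (hab : a ≠ b)
    (ha : insert a e ∈ H) (hb : insert b e ∈ H) :
    ∀ (k : ℕ) (E : Finset V), (E ∩ e).card = k → E ∈ H → a ∈ E → b ∈ E → False := by
  have hae := aux_not_mem hr hH he ha
  have hbe := aux_not_mem hr hH he hb
  intro k
  induction k with
  | zero =>
    intro E hk hE haE hbE
    apply hfree
    have hbE' : b ∈ E.erase a := Finset.mem_erase.2 ⟨hab.symm, hbE⟩
    refine ⟨e, (E.erase a).erase b, a, b, he, ?_, hab, hae, hbe, by simp, by simp, ?_, ha, hb, ?_⟩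
    · rw [Finset.card_erase_of_mem hbE', Finset.card_erase_of_mem haE, hH E hE]; omega
    · rw [Finset.card_eq_zero, ← Finset.disjoint_iff_inter_eq_empty] at hk
      exact (hk.mono_left ((Finset.erase_subset _ _).trans (Finset.erase_subset _ _))).symm
    · rw [Finset.insert_erase hbE', Finset.insert_erase haE]; exact hE
  | succ k ih =>
    intro E hk hE haE hbE
    have hne : (E ∩ e).Nonempty := by rw [← Finset.card_pos]; omega
    obtain ⟨w, hw⟩ := hne
    have hw' := Finset.mem_inter.1 hw
    obtain ⟨hc, hs⟩ := aux_erase hH hE hw'.1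
    have hd := hdeg _ hs
    obtain ⟨z, hz, hze⟩ := Finset.exists_mem_notMem_of_card_lt_card (s := e) (t := nbhd H (E.erase w))
      (by omega)
    simp only [nbhd, Finset.mem_filter, Finset.mem_univ, true_and] at hz
    have hwa : a ≠ w := fun h => hae (h ▸ hw'.2)
    have hwb : b ≠ w := fun h => hbe (h ▸ hw'.2)
    refine ih (insert z (E.erase w)) ?_ hz (by simp [hwa, haE]) (by simp [hwb, hbE])
    rw [Finset.insert_inter_of_notMem hze, Finset.erase_inter, Finset.card_erase_of_mem hw]
    omega

/-- Setting of the proof of the main theorem: `V_1, …, V_r` are pairwise disjoint independent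
sets of size greater than `2n/(2r+1)` each, `v` is a vertex outside all of them, and for each
`i`, `L i` is the set of `(r-1)`-sets `e` in the link of `v` with `|e ∩ V_j| = 1` for all
`j ≠ i`. Then at most one of the sets `L 1, …, L r` is nonempty. -/
theorem stmt8 {V : Type*} [Fintype V] [DecidableEq V] {r n : ℕ} (hr : 3 ≤ r)
    (hn : ((r : ℝ) - 1) * (2 * r + 1) / 2 ≤ n) (hV : Fintype.card V = n)
    {H : Finset (Finset V)} (hH : ∀ E ∈ H, E.card = r)
    (hfree : IsTrFree r H)
    (hdeg : ∀ e ∈ sshadow r H, 2 * (n : ℝ) / (2 * r + 1) < ((nbhd H e).card : ℝ))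
    (P : Fin r → Finset V)
    (hdisj : ∀ i j, i ≠ j → Disjoint (P i) (P j))
    (hindep : ∀ i, IsIndep H (P i))
    (hsize : ∀ i, 2 * (n : ℝ) / (2 * r + 1) < ((P i).card : ℝ))
    {v : V} (hv : ∀ i, v ∉ P i)
    (L : Fin r → Finset (Finset V))
    (hL : ∀ i, L i = Finset.univ.filter (fun e : Finset V =>
      e.card = r - 1 ∧ insert v e ∈ H ∧ ∀ j, j ≠ i → (e ∩ P j).card = 1)) :
    ∀ i j : Fin r, (L i).Nonempty → (L j).Nonempty → i = j := by
  intro i j hi hj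
  by_contra hij
  obtain ⟨e₁, h1⟩ := hi
  obtain ⟨e₂, h2⟩ := hj
  simp only [hL, Finset.mem_filter, Finset.mem_univ, true_and] at h1 h2
  obtain ⟨c1, m1, t1⟩ := h1
  obtain ⟨c2, m2, t2⟩ := h2
  obtain ⟨t, ht⟩ : ∃ t : ℝ, t = 2 * (n : ℝ) / (2 * r + 1) := ⟨_, rfl⟩
  rw [← ht] at hdeg hsize
  have hpos : (0 : ℝ) < 2 * r + 1 := by positivity
  have htn : r * t + t / 2 = n := by rw [ht]; field_simp
  have htr : (r : ℝ) - 1 ≤ t := by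
    rw [ht, le_div_iff₀ hpos]; linarith
  have hdegN : ∀ e ∈ sshadow r H, r - 1 < (nbhd H e).card := by
    intro e he
    have h := hdeg e he
    have h' : ((r - 1 : ℕ) : ℝ) < ((nbhd H e).card : ℝ) := by
      rw [Nat.cast_sub (by omega)]; push_cast; linarith
    exact_mod_cast h'
  have ind : ∀ {e : Finset V}, e.card = r - 1 → ∀ {a b : V}, a ≠ b → insert a e ∈ H →
      insert b e ∈ H → ∀ E ∈ H, a ∈ E → b ∈ E → False := by
    intro e he a b hab ha hb E hE haE hbE
    exact aux_indep hr hH hfree hdegN he hab ha hb _ E rfl hE haE hbE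
  have pind : ∀ k, ∀ E ∈ H, ∀ a b, a ≠ b → a ∈ E → b ∈ E → a ∈ P k → b ∈ P k → False := by
    intro k E hE a b hab haE hbE ha hb
    have := Finset.card_le_one.1 (hindep k E hE) a (by simp [haE, ha]) b (by simp [hbE, hb])
    exact hab this
  have s1 : e₁ ∈ sshadow r H := by
    simp only [sshadow, Finset.mem_filter, Finset.mem_univ, true_and]
    exact ⟨c1, _, m1, Finset.subset_insert _ _⟩
  obtain ⟨U, hU⟩ : ∃ U : Finset V, U = Finset.univ.biUnion P := ⟨_, rfl⟩
  have hUc : (r : ℝ) * t < U.card := by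
    rw [hU, Finset.card_biUnion (fun a _ b _ h => hdisj a b h)]
    push_cast
    have : ∑ _k : Fin r, t < ∑ k : Fin r, ((P k).card : ℝ) :=
      Finset.sum_lt_sum_of_nonempty ⟨i, Finset.mem_univ i⟩ (fun k _ => hsize k)
    simpa using this
  obtain ⟨A, hA⟩ : ∃ A : Finset V, A = nbhd H e₁ ∩ P i := ⟨_, rfl⟩
  have hsub : nbhd H e₁ ⊆ A ∪ Uᶜ := by
    intro w hw
    by_cases hwU : w ∈ U
    · rw [hU] at hwU
      obtain ⟨k, -, hk⟩ := Finset.mem_biUnion.1 hwU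
      by_cases hki : k = i
      · subst hki; simp [hA, hw, hk]
      · exfalso
        obtain ⟨x, hx⟩ := Finset.card_pos.1 (by rw [t1 k hki]; norm_num : 0 < (e₁ ∩ P k).card)
        rw [Finset.mem_inter] at hx
        simp only [nbhd, Finset.mem_filter, Finset.mem_univ, true_and] at hw
        have hwe := aux_not_mem hr hH c1 hw
        exact pind k _ hw w x (fun h => hwe (h ▸ hx.1)) (by simp) (by simp [hx.1]) hk hx.2
    · simp [hwU]
  have hAc : t / 2 < A.card := by
    have h := hdeg _ s1
    have h3 : (nbhd H e₁).card ≤ A.card + Uᶜ.card :=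
      (Finset.card_le_card hsub).trans (Finset.card_union_le _ _)
    have h4 : U.card + Uᶜ.card = n := by rw [Finset.card_add_card_compl, hV]
    have h3' : ((nbhd H e₁).card : ℝ) ≤ A.card + Uᶜ.card := by exact_mod_cast h3
    have h4' : (U.card : ℝ) + Uᶜ.card = n := by exact_mod_cast h4
    linarith
  obtain ⟨y, hy⟩ := Finset.card_pos.1 (by rw [t2 i hij]; norm_num : 0 < (e₂ ∩ P i).card)
  rw [Finset.mem_inter] at hy
  obtain ⟨E, hE⟩ : ∃ E : Finset V, E = insert v e₂ := ⟨_, rfl⟩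
  rw [← hE] at m2
  have hyE : y ∈ E := by simp [hE, hy.1]
  have hvE : v ∈ E := by simp [hE]
  have hvy : v ≠ y := fun h => hv i (h ▸ hy.2)
  obtain ⟨B, hB⟩ : ∃ B : Finset V, B = E.biUnion (fun u => nbhd H (E.erase u)) := ⟨_, rfl⟩
  have hBc : (r : ℝ) * t < B.card := by
    rw [hB, Finset.card_biUnion]
    · push_cast
      have : ∑ _k ∈ E, t < ∑ u ∈ E, ((nbhd H (E.erase u)).card : ℝ) :=
        Finset.sum_lt_sum_of_nonempty ⟨v, hvE⟩ (fun u hu => hdeg _ (aux_erase hH m2 hu).2)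
      simpa [hH E m2] using this
    · intro a ha b hb hab
      rw [Finset.mem_coe] at ha hb
      refine Finset.disjoint_left.2 ?_
      intro w hwa hwb
      simp only [nbhd, Finset.mem_filter, Finset.mem_univ, true_and] at hwa hwb
      have n1 := aux_not_mem hr hH (aux_erase hH m2 ha).1 hwa
      refine ind (aux_erase hH m2 hb).1 (a := w) (b := b) ?_ hwb
        (by rw [Finset.insert_erase hb]; exact m2) _ hwa (by simp) (by simp [hb, hab.symm])
      rintro rfl
      exact n1 (by simp [hb, hab.symm])
  have hAB : Disjoint A B := by
    rw [Finset.disjoint_left]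
    intro w hwA hwB
    rw [hB, Finset.mem_biUnion] at hwB
    obtain ⟨u, hu, hw⟩ := hwB
    rw [hA, Finset.mem_inter] at hwA
    simp only [nbhd, Finset.mem_filter, Finset.mem_univ, true_and] at hwA hw
    have n1 := aux_not_mem hr hH (aux_erase hH m2 hu).1 hw
    by_cases huy : u = y
    · subst huy
      exact ind c1 (a := v) (b := w) (fun h => hv i (h ▸ hwA.2)) m1 hwA.1 _ hw
        (by simp [hvE, hvy]) (by simp)
    · have hy' : y ∈ E.erase u := by simp [hyE, Ne.symm huy]
      exact pind i _ hw w y (fun h => n1 (h ▸ hy')) (by simp) (Finset.mem_insert_of_mem hy')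
        hwA.2 hy.2
  have hfin : A.card + B.card ≤ n := by
    rw [← Finset.card_union_of_disjoint hAB, ← hV]; exact Finset.card_le_univ _
  have hfin' : (A.card : ℝ) + B.card ≤ n := by exact_mod_cast hfin
  linarith
end

section
/- Let r ≥ 3 and n ≥ (r-1)(2r+1)/2, let H be an n-vertex T_r-free r-graph with δ⁺_{r-1}(H) > 2n/(2r+1), and let V_1, …, V_r be pairwise disjoint independent sets in H, each of size greater than 2n/(2r+1). Let Z = V(H) \ (V_1 ∪ ⋯ ∪ V_r), let v ∈ Z, and let v_1 ∈ N_H(v) ∩ V_1. Then there exists an edge e ∈ H containing both v and v_1 such that |e ∩ (V_2 ∪ ⋯ ∪ V_r)| ≥ r - 2. -/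
variable {V : Type*} [Fintype V] [DecidableEq V]

/-- Setting of the proof of the main theorem: `V_1, …, V_r` are pairwise disjoint independent
sets of size greater than `2n/(2r+1)` each, `v` is a vertex outside all of them, and
`v₁ ∈ N_H(v) ∩ V_1`. Then some edge `E ∈ H` contains both `v` and `v₁` and satisfies
`|E ∩ (V_2 ∪ ⋯ ∪ V_r)| ≥ r - 2`. -/
theorem stmt9 {V : Type*} [Fintype V] [DecidableEq V] {r n : ℕ} (hr : 3 ≤ r)
    (hn : ((r : ℝ) - 1) * (2 * r + 1) / 2 ≤ n) (hV : Fintype.card V = n)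
    {H : Finset (Finset V)} (hH : ∀ E ∈ H, E.card = r)
    (hfree : IsTrFree r H)
    (hdeg : ∀ e ∈ sshadow r H, 2 * (n : ℝ) / (2 * r + 1) < ((nbhd H e).card : ℝ))
    (P : Fin r → Finset V)
    (hdisj : ∀ i j, i ≠ j → Disjoint (P i) (P j))
    (hindep : ∀ i, IsIndep H (P i))
    (hsize : ∀ i, 2 * (n : ℝ) / (2 * r + 1) < ((P i).card : ℝ))
    {v : V} (hv : ∀ i, v ∉ P i)
    {v₁ : V} (hv₁ : v₁ ∈ vnbhd H v ∩ P ⟨0, by omega⟩) :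
    ∃ E ∈ H, v ∈ E ∧ v₁ ∈ E ∧
      r - 2 ≤ (E ∩ (Finset.univ.erase (⟨0, by omega⟩ : Fin r)).biUnion P).card := by
  classical
  obtain ⟨hvn, hv1P⟩ := Finset.mem_inter.1 hv₁
  simp only [vnbhd, Finset.mem_filter, Finset.mem_univ, true_and] at hvn
  obtain ⟨hne, E0, hE0, h1E0, hvE0⟩ := hvn
  set z0 : Fin r := ⟨0, by omega⟩ with hz0
  set U := (Finset.univ.erase z0).biUnion P with hU
  obtain ⟨E, hE, hmax⟩ := Finset.exists_max_image (H.filter (fun E => v ∈ E ∧ v₁ ∈ E))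
    (fun E => (E ∩ U).card) ⟨E0, by simp [hE0, h1E0, hvE0]⟩
  simp only [Finset.mem_filter] at hE hmax
  obtain ⟨hEH, hvE, h1E⟩ := hE
  refine ⟨E, hEH, hvE, h1E, ?_⟩
  by_contra hlt
  push Not at hlt
  have hcE := hH E hEH
  have hex : ∃ z ∈ E, z ∉ (E ∩ U) ∪ {v, v₁} := by
    by_contra hcon
    push Not at hcon
    have h1 := Finset.card_le_card (show E ⊆ (E ∩ U) ∪ {v, v₁} from hcon)
    have h2 := Finset.card_union_le (E ∩ U) {v, v₁}
    have h3 := Finset.card_le_two (a := v) (b := v₁)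
    omega
  obtain ⟨z, hzE, hz⟩ := hex
  simp only [Finset.mem_union, Finset.mem_inter, Finset.mem_insert, Finset.mem_singleton,
    not_or, not_and] at hz
  obtain ⟨hzU, hzv, hz1⟩ := hz
  have hzU := hzU hzE
  have hce : (E.erase z).card = r - 1 := by rw [Finset.card_erase_of_mem hzE, hcE]
  have hsh : E.erase z ∈ sshadow r H := by
    simp only [sshadow, Finset.mem_filter, Finset.mem_univ, true_and]
    exact ⟨hce, E, hEH, Finset.erase_subset _ _⟩
  have hd := hdeg _ hsh
  have hdis : Disjoint (nbhd H (E.erase z)) (Finset.univ.biUnion P) := by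
    rw [Finset.disjoint_left]
    intro w hw hwP
    simp only [nbhd, Finset.mem_filter, Finset.mem_univ, true_and] at hw
    have hwe : w ∉ E.erase z := by
      intro h
      have := hH _ hw
      rw [Finset.insert_eq_of_mem h] at this
      omega
    have hvw : v ∈ insert w (E.erase z) := by simp [hvE, Ne.symm hzv]
    have h1e : v₁ ∈ E.erase z := by simp [h1E, Ne.symm hz1]
    have h1w : v₁ ∈ insert w (E.erase z) := Finset.mem_insert_of_mem h1e
    simp only [Finset.mem_biUnion, Finset.mem_univ, true_and] at hwP
    obtain ⟨i, hi⟩ := hwP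
    by_cases hi0 : i = z0
    · subst hi0
      have h := hindep z0 _ hw
      rw [Finset.card_le_one] at h
      have := h w (by simp [hi]) v₁ (Finset.mem_inter.2 ⟨h1w, hv1P⟩)
      exact hwe (this ▸ h1e)
    · have hwU : w ∈ U := Finset.mem_biUnion.2 ⟨i, by simp [hi0], hi⟩
      have hm := hmax _ ⟨hw, hvw, h1w⟩
      have hwEU : w ∉ E ∩ U := by
        intro h
        apply hwe
        refine Finset.mem_erase.2 ⟨?_, (Finset.mem_inter.1 h).1⟩
        rintro rfl
        exact hzU hwU
      have hsub : insert w (E ∩ U) ⊆ insert w (E.erase z) ∩ U := by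
        intro x hx
        rcases Finset.mem_insert.1 hx with rfl | hx
        · simp [hwU]
        · obtain ⟨a, b⟩ := Finset.mem_inter.1 hx
          have : x ≠ z := by rintro rfl; exact hzU b
          simp [a, b, this]
      have := Finset.card_le_card hsub
      rw [Finset.card_insert_of_notMem hwEU] at this
      omega
  have hcard := Finset.card_le_univ (nbhd H (E.erase z) ∪ Finset.univ.biUnion P)
  rw [Finset.card_union_of_disjoint hdis, Finset.card_biUnion (fun i _ j _ h => hdisj i j h),
    hV] at hcard
  have hs : (r : ℝ) * (2 * (n : ℝ) / (2 * r + 1)) ≤ ∑ i, ((P i).card : ℝ) := by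
    have := Finset.card_nsmul_le_sum Finset.univ (fun i => ((P i).card : ℝ)) _
      (fun i _ => (hsize i).le)
    simpa using this
  have hcard' : ((nbhd H (E.erase z)).card : ℝ) + ∑ i, ((P i).card : ℝ) ≤ n := by
    exact_mod_cast hcard
  have hfin : (n : ℝ) ≤ (r + 1) * (2 * (n : ℝ) / (2 * r + 1)) := by
    rw [← mul_div_assoc, le_div_iff₀ (by positivity)]
    have : (0 : ℝ) ≤ n := by positivity
    nlinarith
  linarith
end

section
/- Let ℓ ≥ r ≥ 3 be integers and let H be an r-graph such that the (r-2)-th shadow ∂_{r-2}H (a 2-graph) contains no clique on ℓ+1 vertices, and δ⁺_{r-1}(H) > (r-2)·binom(ℓ,2). Then H is H_{ℓ+1}^r-free, i.e. H contains no copy of the expansion of the complete graph K_{ℓ+1}. -/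
variable {V : Type*} [Fintype V] [DecidableEq V]

/-- `H` contains no copy of the expansion `H_{ℓ+1}^r` of the complete graph `K_{ℓ+1}`. -/
def ExpansionFree (r ℓ : ℕ) (H : Finset (Finset V)) : Prop :=
  ¬ ∃ (f : Fin (ℓ + 1) → V) (g : Fin (ℓ + 1) → Fin (ℓ + 1) → Finset V),
      Function.Injective f ∧
      (∀ i j, i < j → (g i j).card = r - 2) ∧
      (∀ i j, i < j → ∀ k, f k ∉ g i j) ∧
      (∀ i j, i < j → ∀ i' j', i' < j' → (i, j) ≠ (i', j') → Disjoint (g i j) (g i' j')) ∧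
      (∀ i j, i < j → insert (f i) (insert (f j) (g i j)) ∈ H)

/-- Let `ℓ ≥ r ≥ 3`. If `H` is an `r`-graph whose `(r-2)`-th shadow contains no clique on
`ℓ + 1` vertices and whose minimum positive codegree exceeds `(r-2)·C(ℓ,2)`, then `H`
contains no copy of the expansion `H_{ℓ+1}^r` of `K_{ℓ+1}`. -/
theorem stmt10 {V : Type*} [Fintype V] [DecidableEq V] {r ℓ : ℕ} (hr : 3 ≤ r) (hℓ : r ≤ ℓ)
    {H : Finset (Finset V)} (hH : ∀ E ∈ H, E.card = r)
    (hK : ¬ ∃ S : Finset V, S.card = ℓ + 1 ∧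
      ∀ a ∈ S, ∀ b ∈ S, a ≠ b → ({a, b} : Finset V) ∈ Finset.shadow^[r - 2] H)
    (hdeg : ∀ e ∈ sshadow r H, (r - 2) * ℓ.choose 2 < (nbhd H e).card) :
    ExpansionFree r ℓ H := by
  rintro ⟨f, g, hf, hc, hn, -, hE⟩
  apply hK
  refine ⟨Finset.univ.image f, ?_, ?_⟩
  · rw [Finset.card_image_of_injective _ hf]
    simp
  have key : ∀ i j : Fin (ℓ + 1), i < j → ({f i, f j} : Finset V) ∈ Finset.shadow^[r - 2] H := by
    intro i j hij
    rw [Finset.mem_shadow_iterate_iff_exists_mem_card_add]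
    refine ⟨_, hE i j hij, ?_, ?_⟩
    · intro x hx
      simp only [Finset.mem_insert, Finset.mem_singleton] at hx ⊢
      tauto
    · rw [hH _ (hE i j hij), Finset.card_pair (fun h => hij.ne (hf h))]
      omega
  intro a ha b hb hab
  simp only [Finset.mem_image, Finset.mem_univ, true_and] at ha hb
  obtain ⟨i, rfl⟩ := ha
  obtain ⟨j, rfl⟩ := hb
  rcases lt_trichotomy i j with h | h | h
  · exact key i j h
  · exact absurd (congrArg f h) hab
  · rw [Finset.pair_comm]
    exact key j i h
end

section
/- Let r ≥ 3 and let (x_1, …, x_{r-2}, y_1, …, y_5) be a tuple of positive integers. Then the blowup W_5^r[x_1, …, x_{r-2}, y_1, …, y_5] of the r-uniform 5-wheel is T_r-free and is not r-partite. -/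
variable {V : Type*} [Fintype V] [DecidableEq V]

/-- Vertex type of the blowup of the r-uniform 5-wheel, with u-parts of sizes `x i`
and v-parts of sizes `y j`. -/
abbrev WheelVert (r : ℕ) (x : Fin (r - 2) → ℕ) (y : Fin 5 → ℕ) : Type :=
  (Σ i : Fin (r - 2), Fin (x i)) ⊕ (Σ j : Fin 5, Fin (y j))

/-- The part containing a given vertex of the blowup. -/
def wpart {r : ℕ} {x : Fin (r - 2) → ℕ} {y : Fin 5 → ℕ} :
    WheelVert r x y → Fin (r - 2) ⊕ Fin 5
  | Sum.inl a => Sum.inl a.1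
  | Sum.inr b => Sum.inr b.1

/-- The blowup `W_5^r[x_1, …, x_{r-2}, y_1, …, y_5]` of the r-uniform 5-wheel:
edges are all r-sets having exactly one vertex in each u-part and exactly one vertex in
each of two (cyclically) consecutive v-parts. -/
def blowupW5 (r : ℕ) (x : Fin (r - 2) → ℕ) (y : Fin 5 → ℕ) :
    Finset (Finset (WheelVert r x y)) :=
  Finset.univ.filter (fun E =>
    ∃ j : Fin 5,
      (∀ i : Fin (r - 2), (E.filter (fun a => wpart a = Sum.inl i)).card = 1) ∧
      (E.filter (fun a => wpart a = Sum.inr j)).card = 1 ∧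
      (E.filter (fun a => wpart a = Sum.inr (j + 1))).card = 1 ∧
      (∀ j' : Fin 5, j' ≠ j → j' ≠ j + 1 →
        (E.filter (fun a => wpart a = Sum.inr j')).card = 0))

def wpat (j p : Fin 5) : ℕ := if p = j ∨ p = j + 1 then 1 else 0

lemma wpat_no_tri : ∀ a b : Fin 5, a ≠ b → ∀ j3, wpat j3 a = 1 → wpat j3 b = 1 →
    ∀ j1, wpat j1 a = 1 → ∀ j2,
    ¬ (∀ p, wpat j1 p + (if b = p then 1 else 0) = wpat j2 p + (if a = p then 1 else 0)) := by
  unfold wpat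
  decide

lemma blow_mem {r : ℕ} {x : Fin (r - 2) → ℕ} {y : Fin 5 → ℕ}
    {E : Finset (WheelVert r x y)} :
    E ∈ blowupW5 r x y ↔ ∃ j : Fin 5,
      (∀ i : Fin (r - 2), (E.filter (fun a => wpart a = Sum.inl i)).card = 1) ∧
      ∀ p, (E.filter (fun a => wpart a = Sum.inr p)).card = wpat j p := by
  simp only [blowupW5, Finset.mem_filter, Finset.mem_univ, true_and]
  refine exists_congr fun j => and_congr_right fun _ => ⟨?_, ?_⟩
  · rintro ⟨h1, h2, h3⟩ p
    unfold wpat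
    split_ifs with h
    · rcases h with rfl | rfl <;> assumption
    · push Not at h
      exact h3 p h.1 h.2
  · intro h
    refine ⟨?_, ?_, ?_⟩
    · rw [h]; simp [wpat]
    · rw [h]; simp [wpat]
    · intro p h1 h2
      rw [h]; simp [wpat, h1, h2]

lemma card_ins {α β : Type*} [DecidableEq α] [DecidableEq β] (f : α → β) (S : Finset α) (a : α)
    (h : a ∉ S) (p : β) : ((insert a S).filter (fun v => f v = p)).card =
      (S.filter (fun v => f v = p)).card + if f a = p then 1 else 0 := by
  rw [Finset.filter_insert]
  split_ifs with hp
  · rw [Finset.card_insert_of_notMem (by simp [h])]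
  · simp

lemma blow_free {r : ℕ} (x : Fin (r - 2) → ℕ) (y : Fin 5 → ℕ) :
    IsTrFree r (blowupW5 r x y) := by
  rintro ⟨S, W, a, b, -, -, hab, haS, hbS, haW, hbW, -, h1, h2, h3⟩
  rw [blow_mem] at h1 h2 h3
  obtain ⟨j1, l1, r1⟩ := h1
  obtain ⟨j2, l2, r2⟩ := h2
  obtain ⟨j3, l3, r3⟩ := h3
  have haW' : a ∉ insert b W := by simp [hab, haW]
  simp only [card_ins wpart S a haS, card_ins wpart S b hbS, card_ins wpart _ a haW',
    card_ins wpart W b hbW] at l1 l2 l3 r1 r2 r3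
  have key : ∀ i, wpart a ≠ Sum.inl i := by
    intro i hi
    have e1 := l1 i
    have e2 := l2 i
    have e3 := l3 i
    rw [if_pos hi] at e1 e3
    by_cases hb : wpart b = Sum.inl i
    · rw [if_pos hb] at e3; omega
    · rw [if_neg hb] at e2; omega
  have key2 : ∀ i, wpart b ≠ Sum.inl i := by
    intro i hi
    have e1 := l1 i
    have e2 := l2 i
    rw [if_pos hi] at e2
    rw [if_neg (key i)] at e1
    omega
  obtain ⟨pa, hpa⟩ : ∃ p, wpart a = Sum.inr p := by
    cases h : wpart a with
    | inl i => exact absurd h (key i)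
    | inr p => exact ⟨p, rfl⟩
  obtain ⟨pb, hpb⟩ : ∃ p, wpart b = Sum.inr p := by
    cases h : wpart b with
    | inl i => exact absurd h (key2 i)
    | inr p => exact ⟨p, rfl⟩
  simp only [hpa, hpb, Sum.inr.injEq] at r1 r2 r3
  have le1 : ∀ j p, wpat j p ≤ 1 := by
    intro j p; unfold wpat; split_ifs <;> omega
  refine wpat_no_tri pa pb ?_ j3 ?_ ?_ j1 ?_ j2 ?_
  · rintro rfl
    have := r3 pa
    have := le1 j3 pa
    simp at *
    omega
  · have := r3 pa
    have := le1 j3 pa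
    simp only [if_true] at *
    omega
  · have := r3 pb
    have := le1 j3 pb
    simp only [if_true] at *
    omega
  · have := r1 pa
    have := le1 j1 pa
    simp only [if_true] at *
    omega
  · intro p
    have := r1 p
    have := r2 p
    omega

lemma blow_not_partite {r : ℕ} (hr : 3 ≤ r) (x : Fin (r - 2) → ℕ) (y : Fin 5 → ℕ)
    (hx : ∀ i, 0 < x i) (hy : ∀ j, 0 < y j) : ¬ IsRPartite r (blowupW5 r x y) := by
  rintro ⟨P, hP, hI⟩
  obtain ⟨rep, hrep⟩ : ∃ rep : Fin (r - 2) ⊕ Fin 5 → WheelVert r x y, ∀ p, wpart (rep p) = p := by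
    refine ⟨fun p => match p with
      | Sum.inl i => Sum.inl ⟨i, ⟨0, hx i⟩⟩
      | Sum.inr j => Sum.inr ⟨j, ⟨0, hy j⟩⟩, ?_⟩
    rintro (i | j) <;> rfl
  have hinj : Function.Injective rep := fun p q h => by rw [← hrep p, h, hrep]
  choose c hc _ using fun p => hP (rep p)
  -- separation
  have sep : ∀ (j : Fin 5) (p q : Fin (r - 2) ⊕ Fin 5), p ≠ q →
      (∀ k, p = Sum.inr k → k = j ∨ k = j + 1) → (∀ k, q = Sum.inr k → k = j ∨ k = j + 1) →
      c p ≠ c q := by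
    intro j p q hpq hp hq heq
    let T : Finset (Fin (r - 2) ⊕ Fin 5) :=
      Finset.univ.filter (fun p => ∀ k, p = Sum.inr k → k = j ∨ k = j + 1)
    have hcard : ∀ s, ((T.image rep).filter (fun v => wpart v = s)).card
        = if s ∈ T then 1 else 0 := by
      intro s
      split_ifs with h
      · rw [Finset.card_eq_one]
        refine ⟨rep s, ?_⟩
        ext v
        simp only [Finset.mem_filter, Finset.mem_image, Finset.mem_singleton]
        constructor
        · rintro ⟨⟨t, ht, rfl⟩, h2⟩
          rw [hrep] at h2; rw [h2]
        · rintro rfl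
          exact ⟨⟨s, h, rfl⟩, hrep s⟩
      · rw [Finset.card_eq_zero, Finset.filter_eq_empty_iff]
        intro v hv hs
        obtain ⟨t, ht, rfl⟩ := Finset.mem_image.1 hv
        rw [hrep] at hs
        exact h (hs ▸ ht)
    have hE : T.image rep ∈ blowupW5 r x y := by
      rw [blow_mem]
      refine ⟨j, fun i => ?_, fun k => ?_⟩
      · rw [hcard, if_pos (by simp [T])]
      · rw [hcard]; simp [T, wpat]
    have := hI (c p) _ hE
    rw [Finset.card_le_one] at this
    refine hpq (hinj (this (rep p) ?_ (rep q) ?_))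
    · exact Finset.mem_inter.2 ⟨Finset.mem_image_of_mem _ (by simpa [T] using hp), hc p⟩
    · exact Finset.mem_inter.2 ⟨Finset.mem_image_of_mem _ (by simpa [T] using hq), heq ▸ hc q⟩
  let D : Finset (Fin r) := Finset.univ.image (fun i => c (Sum.inl i))
  have hD : D.card = r - 2 := by
    rw [Finset.card_image_of_injective]
    · simp
    · intro i i' h
      by_contra hne
      exact sep 0 (Sum.inl i) (Sum.inl i') (by simpa using hne) (by simp) (by simp) h
  have hDc : Dᶜ.card = 2 := by
    rw [Finset.card_compl, hD, Fintype.card_fin]; omega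
  obtain ⟨s, t, -, hst⟩ := Finset.card_eq_two.1 hDc
  have hv : ∀ j, c (Sum.inr j) = s ∨ c (Sum.inr j) = t := by
    intro j
    have : c (Sum.inr j) ∈ Dᶜ := by
      simp only [D, Finset.mem_compl, Finset.mem_image, Finset.mem_univ, true_and, not_exists]
      intro i
      exact sep j _ _ (by simp) (by simp) (by simp)
    simpa [hst] using this
  have ha : ∀ j : Fin 5, c (Sum.inr j) ≠ c (Sum.inr (j + 1)) := by
    intro j
    exact sep j _ _ (by simp) (by simp) (by simp)
  have a0 := ha 0
  have a1 := ha 1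
  have a2 := ha 2
  have a3 := ha 3
  have a4 : c (Sum.inr 4) ≠ c (Sum.inr 0) := ha 4
  simp only [Fin.isValue, zero_add, show (1 : Fin 5) + 1 = 2 from rfl,
    show (2 : Fin 5) + 1 = 3 from rfl, show (3 : Fin 5) + 1 = 4 from rfl] at a0 a1 a2 a3
  have h0 := hv 0
  have h1 := hv 1
  have h2 := hv 2
  have h3 := hv 3
  have h4 := hv 4
  clear ha hv sep
  grind

/-- For `r ≥ 3` and positive part sizes, the blowup of the `r`-uniform `5`-wheel is
`T_r`-free and is not `r`-partite. -/
theorem stmt12 {r : ℕ} (hr : 3 ≤ r) (x : Fin (r - 2) → ℕ) (y : Fin 5 → ℕ)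
    (hx : ∀ i, 0 < x i) (hy : ∀ j, 0 < y j) :
    IsTrFree r (blowupW5 r x y) ∧ ¬ IsRPartite r (blowupW5 r x y) :=
  ⟨blow_free x y, blow_not_partite hr x y hx hy⟩
end

section
/- Let r ≥ 3 and let n be a positive integer with n ≡ 0 (mod 2r+1). The blowup G = W_5^r[2n/(2r+1), …, 2n/(2r+1), n/(2r+1), …, n/(2r+1)] (with r-2 parts of size 2n/(2r+1) and 5 parts of size n/(2r+1)) has exactly n vertices and minimum positive codegree δ⁺_{r-1}(G) = 2n/(2r+1). In particular, for infinitely many n there exists an n-vertex T_r-free non-r-partite r-graph with δ⁺_{r-1} = 2n/(2r+1). -/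
variable {V : Type*} [Fintype V] [DecidableEq V]

def wf {r : ℕ} (j : Fin 5) : Fin (r - 2) ⊕ Fin 5 → ℕ
  | Sum.inl _ => 1
  | Sum.inr j' => if j' = j ∨ j' = j + 1 then 1 else 0

def wcnt {r : ℕ} {x : Fin (r - 2) → ℕ} {y : Fin 5 → ℕ} (E : Finset (WheelVert r x y))
    (p : Fin (r - 2) ⊕ Fin 5) : ℕ := (E.filter (fun a => wpart a = p)).card

theorem mem_blow {r : ℕ} {x : Fin (r - 2) → ℕ} {y : Fin 5 → ℕ} (E : Finset (WheelVert r x y)) :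
    E ∈ blowupW5 r x y ↔ ∃ j, ∀ p, wcnt E p = wf j p := by
  simp only [blowupW5, Finset.mem_filter, Finset.mem_univ, true_and, wcnt]
  refine exists_congr fun j => ?_
  constructor
  · rintro ⟨h1, h2, h3, h4⟩ (i | j')
    · exact h1 i
    · simp only [wf]
      split_ifs with h
      · rcases h with rfl | rfl <;> assumption
      · push Not at h
        exact h4 j' h.1 h.2
  · intro h
    refine ⟨fun i => h _, ?_, ?_, ?_⟩
    · rw [h]; simp [wf]
    · rw [h]; simp [wf]
    · intro j' h1 h2
      rw [h]; simp [wf, h1, h2]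

theorem wcnt_insert {r : ℕ} {x : Fin (r - 2) → ℕ} {y : Fin 5 → ℕ} {E : Finset (WheelVert r x y)}
    {v : WheelVert r x y} (hv : v ∉ E) (p : Fin (r - 2) ⊕ Fin 5) :
    wcnt (insert v E) p = wcnt E p + if wpart v = p then 1 else 0 := by
  unfold wcnt
  rw [Finset.filter_insert]
  split_ifs with h
  · rw [Finset.card_insert_of_notMem (by simp [hv])]
  · simp

theorem wcnt_zero {r : ℕ} {x : Fin (r - 2) → ℕ} {y : Fin 5 → ℕ} {E : Finset (WheelVert r x y)}
    {v : WheelVert r x y} (h : wcnt E (wpart v) = 0) : v ∉ E := by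
  intro hv
  unfold wcnt at h
  rw [Finset.card_eq_zero] at h
  have : v ∈ E.filter (fun a => wpart a = wpart v) := by simp [hv]
  rw [h] at this
  simp at this

theorem wf_sum {r : ℕ} (hr : 3 ≤ r) (j : Fin 5) : ∑ p, wf (r := r) j p = r := by
  rw [Fintype.sum_sum_type]
  have : ∑ j' : Fin 5, wf (r := r) j (Sum.inr j') = 2 := by
    simp only [wf]
    revert j; decide
  rw [this]
  simp [wf]
  omega

theorem card_edge {r : ℕ} (hr : 3 ≤ r) {x : Fin (r - 2) → ℕ} {y : Fin 5 → ℕ}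
    {E : Finset (WheelVert r x y)} (hE : E ∈ blowupW5 r x y) : E.card = r := by
  obtain ⟨j, hj⟩ := (mem_blow E).1 hE
  refine Eq.trans ?_ (wf_sum hr j)
  rw [Finset.card_eq_sum_card_fiberwise (f := wpart) (t := Finset.univ) (by simp)]
  exact Finset.sum_congr rfl fun p _ => hj p

theorem card_part_inl {r : ℕ} {x : Fin (r - 2) → ℕ} {y : Fin 5 → ℕ} (i : Fin (r - 2)) :
    (Finset.univ.filter (fun a : WheelVert r x y => wpart a = Sum.inl i)).card = x i := by
  have : (Finset.univ.filter (fun a : WheelVert r x y => wpart a = Sum.inl i))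
      = (Finset.univ : Finset (Fin (x i))).image (fun t => Sum.inl ⟨i, t⟩) := by
    ext a
    rcases a with ⟨i', t⟩ | ⟨j', t⟩
    · simp only [Finset.mem_filter, Finset.mem_univ, true_and, Finset.mem_image]; simp only [wpart]
      constructor
      · intro h; cases h; exact ⟨t, rfl⟩
      · rintro ⟨_, h⟩; cases h; rfl
    · simp only [Finset.mem_filter, Finset.mem_univ, true_and, Finset.mem_image]; simp only [wpart]
      simp
  rw [this, Finset.card_image_of_injective]
  · simp
  · intro a b h; simpa using h

theorem card_part_inr {r : ℕ} {x : Fin (r - 2) → ℕ} {y : Fin 5 → ℕ} (i : Fin 5) :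
    (Finset.univ.filter (fun a : WheelVert r x y => wpart a = Sum.inr i)).card = y i := by
  have : (Finset.univ.filter (fun a : WheelVert r x y => wpart a = Sum.inr i))
      = (Finset.univ : Finset (Fin (y i))).image (fun t => Sum.inr ⟨i, t⟩) := by
    ext a
    rcases a with ⟨i', t⟩ | ⟨j', t⟩
    · simp only [Finset.mem_filter, Finset.mem_univ, true_and, Finset.mem_image]; simp only [wpart]
      simp
    · simp only [Finset.mem_filter, Finset.mem_univ, true_and, Finset.mem_image]; simp only [wpart]
      constructor
      · intro h; cases h; exact ⟨t, rfl⟩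
      · rintro ⟨_, h⟩; cases h; rfl
  rw [this, Finset.card_image_of_injective]
  · simp
  · intro a b h; simpa using h

/-- a transversal of the parts -/
def wsec {r K k : ℕ} (hK : 0 < K) (hk : 0 < k) :
    Fin (r - 2) ⊕ Fin 5 → WheelVert r (fun _ => K) (fun _ => k)
  | Sum.inl i => Sum.inl ⟨i, ⟨0, hK⟩⟩
  | Sum.inr j => Sum.inr ⟨j, ⟨0, hk⟩⟩

theorem wpart_wsec {r K k : ℕ} (hK : 0 < K) (hk : 0 < k) (p : Fin (r - 2) ⊕ Fin 5) :
    wpart (wsec hK hk p) = p := by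
  rcases p with i | j <;> rfl

theorem wcnt_image {r K k : ℕ} (hK : 0 < K) (hk : 0 < k) (P : Finset (Fin (r - 2) ⊕ Fin 5))
    (p : Fin (r - 2) ⊕ Fin 5) :
    wcnt (P.image (wsec hK hk)) p = if p ∈ P then 1 else 0 := by
  unfold wcnt
  split_ifs with h
  · rw [Finset.card_eq_one]
    refine ⟨wsec hK hk p, ?_⟩
    ext a
    simp only [Finset.mem_filter, Finset.mem_image, Finset.mem_singleton]
    constructor
    · rintro ⟨⟨q, hq, rfl⟩, h2⟩
      rw [wpart_wsec] at h2; rw [h2]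
    · rintro rfl
      exact ⟨⟨p, h, rfl⟩, wpart_wsec _ _ _⟩
  · rw [Finset.card_eq_zero, Finset.filter_eq_empty_iff]
    intro a ha h2
    obtain ⟨q, hq, rfl⟩ := Finset.mem_image.1 ha
    rw [wpart_wsec] at h2
    exact h (h2 ▸ hq)

def wP (r : ℕ) (j : Fin 5) : Finset (Fin (r - 2) ⊕ Fin 5) :=
  Finset.univ.filter (fun p => wf j p = 1)

theorem edge_wP {r K k : ℕ} (hK : 0 < K) (hk : 0 < k) (j : Fin 5) :
    (wP r j).image (wsec hK hk) ∈ blowupW5 r (fun _ => K) (fun _ => k) := by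
  rw [mem_blow]
  refine ⟨j, fun p => ?_⟩
  rw [wcnt_image]
  simp only [wP, Finset.mem_filter, Finset.mem_univ, true_and]
  rcases p with i | j'
  · simp [wf]
  · simp only [wf]
    split_ifs <;> simp_all

theorem wf_inr_shift {r : ℕ} (j a : Fin 5) (h : wf (r := r) j (Sum.inr a) = 1) :
    ∃ b : Fin 5, b ≠ a ∧ wf (r := r) j (Sum.inr b) = 0 ∧ ∃ j' : Fin 5, ∀ c : Fin 5,
      wf (r := r) j (Sum.inr c) + (if b = c then 1 else 0)
        = wf (r := r) j' (Sum.inr c) + (if a = c then 1 else 0) := by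
  simp only [wf] at *
  revert j a; decide

theorem codeg_lower {r K k : ℕ} (hr : 3 ≤ r) (hKk : K = 2 * k)
    (e : Finset (WheelVert r (fun _ => K) (fun _ => k)))
    (he : e ∈ sshadow r (blowupW5 r (fun _ => K) (fun _ => k))) :
    K ≤ (nbhd (blowupW5 r (fun _ => K) (fun _ => k)) e).card := by
  simp only [sshadow, Finset.mem_filter, Finset.mem_univ, true_and] at he
  obtain ⟨hc, E, hE, hsub⟩ := he
  have hcE := card_edge hr hE
  obtain ⟨v, hv, rfl⟩ : ∃ v, v ∉ e ∧ insert v e = E := by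
    have h1 : (E \ e).card = 1 := by
      rw [Finset.card_sdiff_of_subset hsub]; omega
    obtain ⟨v, hv⟩ := Finset.card_eq_one.1 h1
    have h2 : v ∈ E \ e := by simp [hv]
    refine ⟨v, (Finset.mem_sdiff.1 h2).2, ?_⟩
    rw [Finset.insert_eq, ← hv, Finset.sdiff_union_of_subset hsub]
  obtain ⟨j, hj⟩ := (mem_blow _).1 hE
  have hj' := fun p => (wcnt_insert hv p).symm.trans (hj p)
  have same : ∀ w, wpart w = wpart v → insert w e ∈ blowupW5 r (fun _ => K) (fun _ => k) := by
    intro w hw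
    have hle : wf (r := r) j (wpart v) ≤ 1 := by
      rcases wpart v with i | a <;> simp only [wf]
      · exact le_rfl
      · split_ifs <;> simp
    have h0 : w ∉ e := by
      apply wcnt_zero
      have := hj' (wpart v)
      rw [if_pos rfl] at this
      rw [hw]; omega
    rw [mem_blow]
    refine ⟨j, fun p => ?_⟩
    rw [wcnt_insert h0, hw]
    exact hj' p
  rcases hp : wpart v with i | a
  · refine (card_part_inl (x := fun _ => K) (y := fun _ => k) i).symm.le.trans ?_
    apply Finset.card_le_card
    intro w hw
    simp only [Finset.mem_filter, Finset.mem_univ, true_and, nbhd] at hw ⊢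
    exact same w (hw.trans hp.symm)
  · have h1 : wf (r := r) j (Sum.inr a) = 1 := by
      have := hj' (Sum.inr a)
      rw [if_pos hp] at this
      have hle : wf (r := r) j (Sum.inr a) ≤ 1 := by
        simp only [wf]
        split_ifs <;> simp
      omega
    obtain ⟨b, hba, hb0, j2, hj2⟩ := wf_inr_shift j a h1
    have hdis : Disjoint
        (Finset.univ.filter
          (fun w : WheelVert r (fun _ => K) (fun _ => k) => wpart w = Sum.inr a))
        (Finset.univ.filter
          (fun w : WheelVert r (fun _ => K) (fun _ => k) => wpart w = Sum.inr b)) := by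
      rw [Finset.disjoint_left]
      intro w hw hw2
      simp only [Finset.mem_filter, Finset.mem_univ, true_and] at hw hw2
      rw [hw] at hw2
      exact hba (Sum.inr.inj hw2).symm
    have hcu := Finset.card_union_of_disjoint hdis
    rw [card_part_inr, card_part_inr] at hcu
    refine (show K = k + k by omega).le.trans (hcu.symm.le.trans ?_)
    apply Finset.card_le_card
    intro w hw
    simp only [Finset.mem_union, Finset.mem_filter, Finset.mem_univ, true_and, nbhd] at hw ⊢
    rcases hw with hw | hw
    · exact same w (hw.trans hp.symm)
    · have h0 : w ∉ e := by
        apply wcnt_zero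
        have := hj' (Sum.inr b)
        rw [hb0] at this
        rw [hw]; omega
      rw [mem_blow]
      refine ⟨j2, fun p => ?_⟩
      rw [wcnt_insert h0, hw]
      have h3 := hj' p
      rw [hp] at h3
      rcases p with i | c
      · simp only [wf] at h3 ⊢
        simpa using h3
      · have h4 := hj2 c
        simp only [Sum.inr.injEq] at h3 ⊢
        omega

theorem codeg_upper {r K k : ℕ} (hr : 3 ≤ r) (hK : 0 < K) (hk : 0 < k) :
    ∃ e ∈ sshadow r (blowupW5 r (fun _ => K) (fun _ => k)),
      (nbhd (blowupW5 r (fun _ => K) (fun _ => k)) e).card ≤ K := by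
  let i0 : Fin (r - 2) := ⟨0, by omega⟩
  have hinj : Function.Injective (wsec (r := r) hK hk) :=
    Function.LeftInverse.injective (wpart_wsec hK hk)
  have hmem : (Sum.inl i0) ∈ wP r 0 := by simp [wP, wf]
  refine ⟨((wP r 0).erase (Sum.inl i0)).image (wsec hK hk), ?_, ?_⟩
  · simp only [sshadow, Finset.mem_filter, Finset.mem_univ, true_and]
    refine ⟨?_, _, edge_wP hK hk 0, Finset.image_subset_image (Finset.erase_subset _ _)⟩
    have h := card_edge hr (edge_wP (r := r) hK hk 0)
    rw [Finset.card_image_of_injective _ hinj] at h ⊢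
    rw [Finset.card_erase_of_mem hmem, h]
  · conv_rhs => rw [← card_part_inl (x := fun _ => K) (y := fun _ => k) i0]
    apply Finset.card_le_card
    intro w hw
    simp only [Finset.mem_filter, Finset.mem_univ, true_and, nbhd] at hw ⊢
    obtain ⟨j, hj⟩ := (mem_blow _).1 hw
    have h := hj (Sum.inl i0)
    have hz := wcnt_image hK hk ((wP r 0).erase (Sum.inl i0)) (Sum.inl i0)
    rw [if_neg (by simp)] at hz
    by_contra hne
    by_cases hmw : w ∈ ((wP r 0).erase (Sum.inl i0)).image (wsec hK hk)
    · rw [Finset.insert_eq_of_mem hmw, hz] at h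
      simp [wf] at h
    · rw [wcnt_insert hmw, hz, if_neg hne] at h
      simp [wf] at h

theorem wf_tri (j1 j2 j3 a b : Fin 5) (r : ℕ)
    (h12 : ∀ c : Fin 5, wf (r := r) j1 (Sum.inr c) + (if b = c then 1 else 0)
        = wf (r := r) j2 (Sum.inr c) + (if a = c then 1 else 0))
    (hab : a ≠ b) (ha : wf (r := r) j3 (Sum.inr a) = 1) (hb : wf (r := r) j3 (Sum.inr b) = 1) :
    False := by
  simp only [wf] at *
  revert j1 j2 j3 a b; decide

theorem tr_free {r : ℕ} {x : Fin (r - 2) → ℕ} {y : Fin 5 → ℕ} :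
    IsTrFree r (blowupW5 r x y) := by
  rintro ⟨S, W, a, b, -, -, hab, haS, hbS, haW, hbW, -, h1, h2, h3⟩
  obtain ⟨j1, h1⟩ := (mem_blow _).1 h1
  obtain ⟨j2, h2⟩ := (mem_blow _).1 h2
  obtain ⟨j3, h3⟩ := (mem_blow _).1 h3
  have e1 := fun p => (wcnt_insert haS p).symm.trans (h1 p)
  have e2 := fun p => (wcnt_insert hbS p).symm.trans (h2 p)
  have haW' : a ∉ insert b W := by simp [hab, haW]
  have e3 : ∀ p, wcnt W p + (if wpart b = p then 1 else 0) + (if wpart a = p then 1 else 0)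
      = wf j3 p := by
    intro p
    rw [← h3 p, wcnt_insert haW', wcnt_insert hbW]
  have hle : ∀ (j : Fin 5) p, wf (r := r) j p ≤ 1 := by
    rintro j (i | c) <;> simp only [wf]
    · exact le_rfl
    · split_ifs <;> simp
  have hne : wpart a ≠ wpart b := by
    intro h
    have := e3 (wpart a)
    have := hle j3 (wpart a)
    rw [if_pos rfl, if_pos h.symm] at *
    omega
  have key : ∀ p, wf (r := r) j1 p + (if wpart b = p then 1 else 0)
      = wf j2 p + (if wpart a = p then 1 else 0) := by
    intro p
    have := e1 p
    have := e2 p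
    omega
  rcases hpa : wpart a with i | ca
  · have := key (Sum.inl i)
    rw [if_pos hpa, if_neg (by rw [← hpa]; exact hne.symm)] at this
    simp [wf] at this
  · rcases hpb : wpart b with i | cb
    · have := key (Sum.inl i)
      rw [if_pos hpb, if_neg (by rw [← hpb]; exact hne)] at this
      simp [wf] at this
    · rw [hpa, hpb] at key e3 hne
      refine wf_tri j1 j2 j3 ca cb r (fun c => ?_) (fun h => hne (by rw [h])) ?_ ?_
      · simpa using key (Sum.inr c)
      · have := e3 (Sum.inr ca)
        have := hle j3 (Sum.inr ca)
        rw [if_pos rfl] at *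
        omega
      · have := e3 (Sum.inr cb)
        have := hle j3 (Sum.inr cb)
        rw [if_pos rfl] at *
        omega

theorem not_part {r K k : ℕ} (hr : 3 ≤ r) (hK : 0 < K) (hk : 0 < k) :
    ¬ IsRPartite r (blowupW5 r (fun _ => K) (fun _ => k)) := by
  rintro ⟨P, hP, hI⟩
  choose col hcol _ using fun v => hP v
  simp only at hcol
  have hinj : Function.Injective (wsec (r := r) hK hk) :=
    Function.LeftInverse.injective (wpart_wsec hK hk)
  have hd : ∀ j p q, p ≠ q → wf (r := r) j p = 1 → wf (r := r) j q = 1 →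
      col (wsec hK hk p) ≠ col (wsec hK hk q) := by
    intro j p q hpq hp hq hcc
    have h := hI (col (wsec hK hk p)) _ (edge_wP hK hk j)
    rw [Finset.card_le_one] at h
    refine hpq (hinj (h _ ?_ _ ?_))
    · rw [Finset.mem_inter]
      exact ⟨Finset.mem_image_of_mem _ (by simp [wP, hp]), hcol _⟩
    · rw [Finset.mem_inter]
      exact ⟨Finset.mem_image_of_mem _ (by simp [wP, hq]), hcc ▸ hcol _⟩
  let U : Finset (Fin r) := Finset.univ.image (fun i => col (wsec hK hk (Sum.inl i)))
  have hU : U.card = r - 2 := by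
    rw [Finset.card_image_of_injective]
    · simp
    · intro a b hab
      by_contra hne
      exact hd 0 (Sum.inl a) (Sum.inl b) (by simpa using hne) rfl rfl hab
  have hUc : Uᶜ.card = 2 := by
    rw [Finset.card_compl, hU, Fintype.card_fin]; omega
  obtain ⟨α, β, -, hαβ⟩ := Finset.card_eq_two.1 hUc
  have hv : ∀ j : Fin 5, col (wsec hK hk (Sum.inr j)) = α ∨ col (wsec hK hk (Sum.inr j)) = β := by
    intro j
    have : col (wsec hK hk (Sum.inr j)) ∈ Uᶜ := by
      rw [Finset.mem_compl]
      intro h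
      obtain ⟨i, -, hi⟩ := Finset.mem_image.1 h
      exact hd j (Sum.inl i) (Sum.inr j) (by simp) rfl (by simp [wf]) hi
    rw [hαβ] at this
    simpa using this
  have hvd : ∀ j : Fin 5, col (wsec hK hk (Sum.inr j)) ≠ col (wsec hK hk (Sum.inr (j + 1))) := by
    intro j
    exact hd j _ _ (by simp) (by simp [wf]) (by simp [wf])
  generalize hg : (fun j : Fin 5 => col (wsec (r := r) hK hk (Sum.inr j))) = g
  have hg' : ∀ j, col (wsec (r := r) hK hk (Sum.inr j)) = g j := fun j => congrFun hg j
  simp only [hg'] at hv hvd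
  have d0 : g 0 ≠ g 1 := hvd 0
  have d1 : g 1 ≠ g 2 := hvd 1
  have d2 : g 2 ≠ g 3 := hvd 2
  have d3 : g 3 ≠ g 4 := hvd 3
  have d4 : g 4 ≠ g 0 := hvd 4
  have v0 := hv 0
  have v1 := hv 1
  have v2 := hv 2
  have v3 := hv 3
  have v4 := hv 4
  clear hv hvd hg hg'
  grind

/-- For `r ≥ 3` and `n > 0` divisible by `2r + 1`, the blowup of the `r`-uniform `5`-wheel
with `r - 2` parts of size `2n/(2r+1)` and `5` parts of size `n/(2r+1)` has exactly `n`
vertices and minimum positive codegree exactly `2n/(2r+1)`; it is moreover `T_r`-free and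
not `r`-partite. -/
theorem stmt13 {r n : ℕ} (hr : 3 ≤ r) (hn : 0 < n) (hmod : (2 * r + 1) ∣ n) :
    Fintype.card
        (WheelVert r (fun _ => 2 * n / (2 * r + 1)) (fun _ => n / (2 * r + 1))) = n ∧
    minPosCodeg r
        (blowupW5 r (fun _ => 2 * n / (2 * r + 1)) (fun _ => n / (2 * r + 1)))
      = 2 * n / (2 * r + 1) ∧
    IsTrFree r (blowupW5 r (fun _ => 2 * n / (2 * r + 1)) (fun _ => n / (2 * r + 1))) ∧
    ¬ IsRPartite r
        (blowupW5 r (fun _ => 2 * n / (2 * r + 1)) (fun _ => n / (2 * r + 1))) := by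
  obtain ⟨k, rfl⟩ := hmod
  have hk : 0 < k := Nat.pos_of_mul_pos_left hn
  have h1 : (2 * r + 1) * k / (2 * r + 1) = k := Nat.mul_div_cancel_left _ (by omega)
  have h2 : 2 * ((2 * r + 1) * k) / (2 * r + 1) = 2 * k := by
    rw [mul_left_comm]
    exact Nat.mul_div_cancel_left _ (by omega)
  rw [h1, h2]
  have hK : 0 < 2 * k := by omega
  refine ⟨?_, ?_, tr_free, not_part hr hK hk⟩
  · simp
    obtain ⟨s, rfl⟩ : ∃ s, r = s + 2 := ⟨r - 2, by omega⟩
    simp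
    ring
  · obtain ⟨e, he, hle⟩ := codeg_upper hr hK hk
    have heq := le_antisymm hle (codeg_lower hr rfl e he)
    apply le_antisymm
    · exact Nat.sInf_le ⟨e, he, heq⟩
    · refine le_csInf ⟨2 * k, e, he, heq⟩ ?_
      rintro m ⟨e', he', rfl⟩
      exact codeg_lower hr rfl e' he'
end

section
/- Let r ≥ 3 and let n be an integer with 2r-2 ≤ n < (r-1)(2r+1)/2. Then there exists an n-vertex T_r-free r-graph H with δ⁺_{r-1}(H) > 2n/(2r+1) that is not r-partite; namely, the r-graph consisting of all r-subsets of a fixed (2r-2)-set together with n-(2r-2) isolated vertices is T_r-free, has δ⁺_{r-1}(H) = r-1 > 2n/(2r+1), and is not r-partite. -/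
variable {V : Type*} [Fintype V] [DecidableEq V]

/-- For `r ≥ 3` and `2r - 2 ≤ n < (r-1)(2r+1)/2`, there is an `n`-vertex `T_r`-free
`r`-graph with minimum positive codegree `r - 1 > 2n/(2r+1)` that is not `r`-partite:
namely, all `r`-subsets of a fixed `(2r-2)`-set, together with `n - (2r-2)` isolated
vertices. -/
theorem stmt14 {r n : ℕ} (hr : 3 ≤ r) (hn1 : 2 * r - 2 ≤ n)
    (hn2 : (n : ℝ) < ((r : ℝ) - 1) * (2 * r + 1) / 2) :
    ∃ H : Finset (Finset (Fin n)),
      H = (Finset.univ.filter (fun v : Fin n => (v : ℕ) < 2 * r - 2)).powersetCard r ∧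
      (∀ E ∈ H, E.card = r) ∧
      IsTrFree r H ∧
      minPosCodeg r H = r - 1 ∧
      2 * (n : ℝ) / (2 * r + 1) < ((r : ℝ) - 1) ∧
      ¬ IsRPartite r H := by
  classical
  refine ⟨_, rfl, ?_, ?_, ?_, ?_, ?_⟩
  · intro E hE
    exact (Finset.mem_powersetCard.1 hE).2
  all_goals
    have hA : (Finset.univ.filter (fun v : Fin n => (v : ℕ) < 2 * r - 2)).card = 2 * r - 2 := by
      rw [Fin.card_filter_val_lt]
      omega
    generalize (Finset.univ.filter (fun v : Fin n => (v : ℕ) < 2 * r - 2)) = A at hA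
  · rintro ⟨S, W, a, b, hS, hW, hab, haS, hbS, haW, hbW, hd, h1, h2, h3⟩
    rw [Finset.mem_powersetCard] at h1 h2 h3
    have hsub : insert a (insert b (S ∪ W)) ⊆ A := by
      intro x hx
      simp only [Finset.mem_insert, Finset.mem_union] at hx
      rcases hx with h | h | h | h
      · exact h1.1 (by simp [h])
      · exact h2.1 (by simp [h])
      · exact h1.1 (by simp [h])
      · exact h3.1 (by simp [h])
    have hc := Finset.card_le_card hsub
    rw [Finset.card_insert_of_notMem (by simp [*]), Finset.card_insert_of_notMem (by simp [*]),
      Finset.card_union_of_disjoint hd] at hc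
    omega
  · have key : ∀ e ∈ sshadow r (A.powersetCard r), (nbhd (A.powersetCard r) e).card = r - 1 := by
      intro e he
      simp only [sshadow, Finset.mem_filter, Finset.mem_univ, true_and,
        Finset.mem_powersetCard] at he
      obtain ⟨hec, E, ⟨hEA, hEc⟩, heE⟩ := he
      have heA := heE.trans hEA
      have hnb : nbhd (A.powersetCard r) e = A \ e := by
        ext v
        simp only [nbhd, Finset.mem_filter, Finset.mem_univ, true_and,
          Finset.mem_powersetCard, Finset.mem_sdiff]
        constructor
        · rintro ⟨h1, h2⟩
          refine ⟨h1 (by simp), fun hv => ?_⟩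
          rw [Finset.insert_eq_of_mem hv] at h2
          omega
        · rintro ⟨h1, h2⟩
          refine ⟨Finset.insert_subset h1 heA, ?_⟩
          rw [Finset.card_insert_of_notMem h2]
          omega
      rw [hnb, Finset.card_sdiff_of_subset heA]
      omega
    obtain ⟨E, hEA, hEc⟩ := Finset.exists_subset_card_eq (s := A) (n := r) (by omega)
    obtain ⟨e, heE, hec⟩ := Finset.exists_subset_card_eq (s := E) (n := r - 1) (by omega)
    have he : e ∈ sshadow r (A.powersetCard r) := by
      simp only [sshadow, Finset.mem_filter, Finset.mem_univ, true_and,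
        Finset.mem_powersetCard]
      exact ⟨hec, E, ⟨hEA, hEc⟩, heE⟩
    have hset : {k | ∃ e ∈ sshadow r (A.powersetCard r),
        (nbhd (A.powersetCard r) e).card = k} = {r - 1} := by
      ext k
      simp only [Set.mem_setOf_eq, Set.mem_singleton_iff]
      constructor
      · rintro ⟨f, hf, rfl⟩
        exact key f hf
      · rintro rfl
        exact ⟨e, he, key e he⟩
    rw [minPosCodeg, hset]
    exact csInf_singleton _
  · rw [div_lt_iff₀ (by positivity)]
    linarith
  · rintro ⟨P, hP, hI⟩
    choose f hf hf' using hP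
    obtain ⟨u, hu, v, hv, huv, hfe⟩ :=
      Finset.exists_ne_map_eq_of_card_lt_of_maps_to (s := A) (t := (Finset.univ : Finset (Fin r)))
        (f := f) (by rw [Finset.card_univ, Fintype.card_fin]; omega) (fun _ _ => by simp)
    obtain ⟨E, hE1, hE2, hEc⟩ := Finset.exists_subsuperset_card_eq (s := {u, v}) (t := A) (n := r)
      (by intro x hx; simp at hx; rcases hx with rfl | rfl <;> assumption)
      (by rw [Finset.card_pair huv]; omega) (by omega)
    have h := hI (f u) E (Finset.mem_powersetCard.2 ⟨hE2, hEc⟩)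
    have hlt : 1 < (E ∩ P (f u)).card := by
      rw [Finset.one_lt_card]
      refine ⟨u, ?_, v, ?_, huv⟩
      · exact Finset.mem_inter.2 ⟨hE1 (by simp), hf u⟩
      · exact Finset.mem_inter.2 ⟨hE1 (by simp), hfe ▸ hf v⟩
    omega
end

section
/- Let n ≥ 7 be an integer and let H be an n-vertex 3-graph whose shadow ∂H contains no clique on 4 vertices and which satisfies δ₂⁺(H) > 2n/7. Then H is 3-partite. -/
variable {V : Type*} [Fintype V] [DecidableEq V]

theorem bash1_bool : ∀ b0 b1 b2 b3 b4 b5 b6 : Bool, ¬ (b0 = true ∧ b1 = true ∧ b2 = true) → ¬ (b0 = true ∧ b2 = true ∧ b3 = true) → ¬ (b0 = true ∧ b3 = true ∧ b4 = true) → ¬ (b5 = true ∧ b6 = true ∧ b1 = true) → ¬ (b5 = true ∧ b6 = true ∧ b4 = true) → ¬ (b1 = true ∧ b2 = true ∧ b3 = true ∧ b4 = true ∧ b6 = true) → ¬ (b1 = true ∧ b2 = true ∧ b3 = true ∧ b4 = true ∧ b5 = true) →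
    b0.toNat + b1.toNat + b2.toNat + b3.toNat + b4.toNat + b5.toNat + b6.toNat ≤ 4 := by
  intro b0 b1 b2 b3 b4 b5 b6
  cases b0 <;> cases b1 <;> cases b2 <;> cases b3 <;> cases b4 <;> cases b5 <;> cases b6 <;> simp

theorem bash1 (p0 p1 p2 p3 p4 p5 p6 : Prop) [Decidable p0] [Decidable p1] [Decidable p2] [Decidable p3] [Decidable p4] [Decidable p5] [Decidable p6] : ¬ (p0 ∧ p1 ∧ p2) → ¬ (p0 ∧ p2 ∧ p3) → ¬ (p0 ∧ p3 ∧ p4) → ¬ (p5 ∧ p6 ∧ p1) → ¬ (p5 ∧ p6 ∧ p4) → ¬ (p1 ∧ p2 ∧ p3 ∧ p4 ∧ p6) → ¬ (p1 ∧ p2 ∧ p3 ∧ p4 ∧ p5) →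
    (decide p0).toNat + (decide p1).toNat + (decide p2).toNat + (decide p3).toNat + (decide p4).toNat + (decide p5).toNat + (decide p6).toNat ≤ 4 := by
  intro h0 h1 h2 h3 h4 h5 h6
  exact bash1_bool (decide p0) (decide p1) (decide p2) (decide p3) (decide p4) (decide p5) (decide p6)
    (by simpa using h0) (by simpa using h1) (by simpa using h2) (by simpa using h3) (by simpa using h4) (by simpa using h5) (by simpa using h6)

theorem bash2_bool : ∀ b0 b1 b2 b3 b4 b5 b6 : Bool, ¬ (b0 = true ∧ b1 = true ∧ b2 = true) → ¬ (b0 = true ∧ b2 = true ∧ b3 = true) → ¬ (b0 = true ∧ b3 = true ∧ b4 = true) → ¬ (b5 = true ∧ b3 = true ∧ b4 = true) → ¬ (b6 = true ∧ b1 = true ∧ b2 = true) → ¬ (b0 = true ∧ b1 = true ∧ b6 = true ∧ b5 = true ∧ b4 = true) → ¬ (b0 = true ∧ b1 = true ∧ b6 = true ∧ b5 = true ∧ b3 = true) → ¬ (b0 = true ∧ b2 = true ∧ b6 = true ∧ b5 = true ∧ b4 = true) →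
    b0.toNat + b1.toNat + b2.toNat + b3.toNat + b4.toNat + b5.toNat + b6.toNat ≤ 4 := by
  intro b0 b1 b2 b3 b4 b5 b6
  cases b0 <;> cases b1 <;> cases b2 <;> cases b3 <;> cases b4 <;> cases b5 <;> cases b6 <;> simp

theorem bash2 (p0 p1 p2 p3 p4 p5 p6 : Prop) [Decidable p0] [Decidable p1] [Decidable p2] [Decidable p3] [Decidable p4] [Decidable p5] [Decidable p6] : ¬ (p0 ∧ p1 ∧ p2) → ¬ (p0 ∧ p2 ∧ p3) → ¬ (p0 ∧ p3 ∧ p4) → ¬ (p5 ∧ p3 ∧ p4) → ¬ (p6 ∧ p1 ∧ p2) → ¬ (p0 ∧ p1 ∧ p6 ∧ p5 ∧ p4) → ¬ (p0 ∧ p1 ∧ p6 ∧ p5 ∧ p3) → ¬ (p0 ∧ p2 ∧ p6 ∧ p5 ∧ p4) →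
    (decide p0).toNat + (decide p1).toNat + (decide p2).toNat + (decide p3).toNat + (decide p4).toNat + (decide p5).toNat + (decide p6).toNat ≤ 4 := by
  intro h0 h1 h2 h3 h4 h5 h6 h7
  exact bash2_bool (decide p0) (decide p1) (decide p2) (decide p3) (decide p4) (decide p5) (decide p6)
    (by simpa using h0) (by simpa using h1) (by simpa using h2) (by simpa using h3) (by simpa using h4) (by simpa using h5) (by simpa using h6) (by simpa using h7)

open Finset in
theorem aux_link {V : Type*} [Fintype V] [DecidableEq V] (G : SimpleGraph V) [DecidableRel G.Adj]
    (c : ℕ) (hc : 2 * Fintype.card V < 7 * c)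
    (hK : ∀ a b d e, G.Adj a b → G.Adj a d → G.Adj a e → G.Adj b d → G.Adj b e → G.Adj d e → False)
    (hcod : ∀ a b, G.Adj a b → c ≤ #(G.neighborFinset a ∩ G.neighborFinset b)) (v : V) :
    2 * #(G.neighborFinset v) < 5 * c ∧
    ∃ σ : V → Bool, ∀ x y, G.Adj v x → G.Adj v y → G.Adj x y → σ x ≠ σ y := by
  by_cases hv : ∃ x, G.Adj v x
  swap
  · push Not at hv
    refine ⟨?_, fun _ => true, fun x y hx => absurd hx (hv x)⟩
    have : G.neighborFinset v = ∅ := by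
      ext x; simp [hv x]
    rw [this]; simp; omega
  obtain ⟨x, hx⟩ := hv
  have hc0 : 0 < c := by omega
  obtain ⟨y, hy⟩ := Finset.card_pos.1 (lt_of_lt_of_le hc0 (hcod v x hx))
  simp only [mem_inter, SimpleGraph.mem_neighborFinset] at hy
  have hd : #(G.neighborFinset v) + c ≤ Fintype.card V := by
    have h1 := hcod x y hy.2
    have h2 : Disjoint (G.neighborFinset v) (G.neighborFinset x ∩ G.neighborFinset y) := by
      rw [Finset.disjoint_left]
      intro z hz hz'
      simp only [mem_inter, SimpleGraph.mem_neighborFinset] at hz hz'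
      exact hK v x y z hx hy.1 hz hy.2 hz'.1 hz'.2
    have h3 := Finset.card_union_of_disjoint h2
    have h4 := Finset.card_le_univ (G.neighborFinset v ∪ (G.neighborFinset x ∩ G.neighborFinset y))
    omega
  have h5 : 2 * #(G.neighborFinset v) < 5 * c := by omega
  refine ⟨h5, ?_⟩
  classical
  let L := G.induce (G.neighborSet v)
  have hfree : L.CliqueFree 3 := by
    intro s hs
    rw [SimpleGraph.is3Clique_iff] at hs
    obtain ⟨a, b, d, h1, h2, h3, -⟩ := hs
    exact hK v a b d a.2 b.2 d.2 h1 h2 h3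
  have hcard : Fintype.card (G.neighborSet v) = #(G.neighborFinset v) := by
    rw [SimpleGraph.neighborFinset, Set.toFinset_card]
  have : Nonempty (G.neighborSet v) := ⟨⟨x, hx⟩⟩
  have hmin : c ≤ L.minDegree := by
    apply SimpleGraph.le_minDegree_of_forall_le_degree
    intro w
    refine (hcod v w w.2).trans ?_
    rw [← SimpleGraph.card_neighborFinset_eq_degree,
      ← Finset.card_map (Function.Embedding.subtype _) (s := L.neighborFinset w)]
    apply Finset.card_le_card
    intro z hz
    simp only [mem_inter, SimpleGraph.mem_neighborFinset] at hz
    simp only [mem_map, SimpleGraph.mem_neighborFinset]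
    exact ⟨⟨z, hz.1⟩, hz.2, rfl⟩
  have hcol : L.Colorable 2 := by
    apply SimpleGraph.colorable_of_cliqueFree_lt_minDegree hfree
    rw [hcard]
    omega
  obtain ⟨f⟩ := hcol
  refine ⟨fun z => if h : G.Adj v z then decide (f ⟨z, h⟩ = 0) else true, ?_⟩
  intro a b ha hb hab
  have := f.valid (v := ⟨a, ha⟩) (w := ⟨b, hb⟩) hab
  simp only [ha, hb, dif_pos]
  generalize f ⟨a, ha⟩ = i at *
  generalize f ⟨b, hb⟩ = j at *
  clear * - this
  revert i j
  decide

open Finset in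
theorem aux_color {V : Type*} [Fintype V] [DecidableEq V] (G : SimpleGraph V) [DecidableRel G.Adj]
    (c : ℕ) (hc : 2 * Fintype.card V < 7 * c)
    (hK : ∀ a b d e, G.Adj a b → G.Adj a d → G.Adj a e → G.Adj b d → G.Adj b e → G.Adj d e → False)
    (hcod : ∀ a b, G.Adj a b → c ≤ #(G.neighborFinset a ∩ G.neighborFinset b)) :
    ∃ f : V → Fin 3, ∀ a b, G.Adj a b → f a ≠ f b := by
  classical
  have hc0 : 0 < c := by omega
  have hdeg := fun v => (aux_link G c hc hK hcod v).1
  choose σ hσ using fun v => (aux_link G c hc hK hcod v).2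
  let N := fun v => G.neighborFinset v
  have mN : ∀ v x, x ∈ N v ↔ G.Adj v x := fun v x => SimpleGraph.mem_neighborFinset ..
  have hex : ∀ v x, G.Adj v x → ∃ y, G.Adj v y ∧ G.Adj x y := by
    intro v x hx
    obtain ⟨y, hy⟩ := Finset.card_pos.1 (lt_of_lt_of_le hc0 (hcod v x hx))
    simp only [mem_inter, SimpleGraph.mem_neighborFinset] at hy
    exact ⟨y, hy⟩
  let A := fun (v : V) (b : Bool) => (N v).filter (fun y => σ v y = b)
  have mA : ∀ v b x, x ∈ A v b ↔ G.Adj v x ∧ σ v x = b := by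
    intro v b x; simp [A, mN]
  have hsub : ∀ v x, G.Adj v x → N v ∩ N x ⊆ A v (!σ v x) := by
    intro v x hx y hy
    simp only [mem_inter, mN] at hy
    have := hσ v x y hx hy.1 hy.2
    rw [mA]
    refine ⟨hy.1, ?_⟩
    cases h1 : σ v x <;> cases h2 : σ v y <;> simp_all
  have hAc : ∀ v x, G.Adj v x → c ≤ #(A v (!σ v x)) := fun v x hx =>
    (hcod v x hx).trans (card_le_card (hsub v x hx))
  have hAall : ∀ v x, G.Adj v x → ∀ b, c ≤ #(A v b) := by
    intro v x hx b
    obtain ⟨y, hy, hxy⟩ := hex v x hx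
    have h0 := hσ v x y hx hy hxy
    have h1 := hAc v x hx
    have h2 := hAc v y hy
    cases h3 : σ v x <;> cases h4 : σ v y <;> cases b <;> simp_all
  have hAsum : ∀ v, #(A v true) + #(A v false) = #(N v) := by
    intro v
    have := Finset.card_filter_add_card_filter_not (s := N v) (fun y => σ v y = true)
    simpa [A] using this
  have hdeg2 : ∀ v x, G.Adj v x → 2 * c ≤ #(N v) := by
    intro v x hx
    have h1 := hAall v x hx true
    have h2 := hAall v x hx false
    have := hAsum v
    omega
  have hAlt : ∀ v x, G.Adj v x → ∀ b, 2 * #(A v b) < 3 * c := by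
    intro v x hx b
    have h1 := hAall v x hx true
    have h2 := hAall v x hx false
    have h3 := hAsum v
    have h4 : 2 * #(N v) < 5 * c := hdeg v
    cases b <;> omega
  have inter_ge : ∀ (S T U : Finset V), S ⊆ U → T ⊆ U → #S + #T ≤ #U + #(S ∩ T) := by
    intro S T U hS hT
    have := card_union_add_card_inter S T
    have := card_le_card (union_subset hS hT)
    omega
  have L3 : ∀ v x y, G.Adj v x → G.Adj v y → σ v x = σ v y →
      c < 2 * #((N v ∩ N x) ∩ (N v ∩ N y)) := by
    intro v x y hx hy h
    have h1 := hsub v x hx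
    have h2 := hsub v y hy
    rw [← h] at h2
    have := inter_ge _ _ _ h1 h2
    have := hcod v x hx
    have := hcod v y hy
    have := hAlt v x hx (!σ v x)
    simp only [N] at *
    omega
  have L3e : ∀ v x y, G.Adj v x → G.Adj v y → σ v x = σ v y →
      ∃ w, G.Adj v w ∧ G.Adj x w ∧ G.Adj y w := by
    intro v x y hx hy h
    have h1 := L3 v x y hx hy h
    obtain ⟨w, hw⟩ := Finset.card_pos.1 (show 0 < #((N v ∩ N x) ∩ (N v ∩ N y)) by omega)
    simp only [mem_inter, mN] at hw
    exact ⟨w, hw.1.1, hw.1.2, hw.2.2⟩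
  have L4 : ∀ x y x' y', G.Adj x x' → G.Adj y y' → ∃ u, G.Adj u x ∧ G.Adj u y := by
    intro x y x' y' hx hy
    have h1 := hdeg2 x x' hx
    have h2 := hdeg2 y y' hy
    have h3 := inter_ge _ _ _ (subset_univ (N x)) (subset_univ (N y))
    rw [card_univ] at h3
    obtain ⟨w, hw⟩ := Finset.card_pos.1 (show 0 < #(N x ∩ N y) by omega)
    simp only [mem_inter, mN] at hw
    exact ⟨w, hw.1.symm, hw.2.symm⟩
  have tri : ∀ z a b d, G.Adj a b → G.Adj a d → G.Adj b d →
      ¬ (G.Adj a z ∧ G.Adj b z ∧ G.Adj d z) := by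
    rintro z a b d h1 h2 h3 ⟨h4, h5, h6⟩
    exact hK a b d z h1 h2 h4 h3 h5 h6
  have cyc : ∀ z a b d e f, G.Adj a b → G.Adj b d → G.Adj d e → G.Adj e f → G.Adj f a →
      ¬ (G.Adj a z ∧ G.Adj b z ∧ G.Adj d z ∧ G.Adj e z ∧ G.Adj f z) := by
    rintro z a b d e f h1 h2 h3 h4 h5 ⟨k1, k2, k3, k4, k5⟩
    have g1 := hσ z _ _ k1.symm k2.symm h1
    have g2 := hσ z _ _ k2.symm k3.symm h2
    have g3 := hσ z _ _ k3.symm k4.symm h3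
    have g4 := hσ z _ _ k4.symm k5.symm h4
    have g5 := hσ z _ _ k5.symm k1.symm h5
    generalize σ z a = a1 at *
    generalize σ z b = a2 at *
    generalize σ z d = a3 at *
    generalize σ z e = a4 at *
    generalize σ z f = a5 at *
    revert a1 a2 a3 a4 a5
    decide
  have L5 : ∀ p0 p1 p2 p3 p4 p5 p6 : V, (∃ q, G.Adj p0 q) → (∃ q, G.Adj p1 q) →
      (∃ q, G.Adj p2 q) → (∃ q, G.Adj p3 q) → (∃ q, G.Adj p4 q) → (∃ q, G.Adj p5 q) →
      (∃ q, G.Adj p6 q) →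
      (∀ z, (decide (G.Adj p0 z)).toNat + (decide (G.Adj p1 z)).toNat + (decide (G.Adj p2 z)).toNat
        + (decide (G.Adj p3 z)).toNat + (decide (G.Adj p4 z)).toNat + (decide (G.Adj p5 z)).toNat
        + (decide (G.Adj p6 z)).toNat ≤ 4) → False := by
    rintro p0 p1 p2 p3 p4 p5 p6 ⟨_, h0⟩ ⟨_, h1⟩ ⟨_, h2⟩ ⟨_, h3⟩ ⟨_, h4⟩ ⟨_, h5⟩ ⟨_, h6⟩ h
    have key : ∀ p, ∑ z, (decide (G.Adj p z)).toNat = #(N p) := by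
      intro p
      rw [show N p = univ.filter (fun z => G.Adj p z) by ext; simp [mN], card_filter]
      apply sum_congr rfl
      intro z _
      by_cases hz : G.Adj p z <;> simp [hz]
    have hs := Finset.sum_le_sum (s := univ) (fun z _ => h z)
    simp only [sum_add_distrib, key, sum_const, card_univ, smul_eq_mul] at hs
    have := hdeg2 _ _ h0
    have := hdeg2 _ _ h1
    have := hdeg2 _ _ h2
    have := hdeg2 _ _ h3
    have := hdeg2 _ _ h4
    have := hdeg2 _ _ h5
    have := hdeg2 _ _ h6
    omega
  let E := fun x y => ∃ p q, G.Adj p q ∧ G.Adj p x ∧ G.Adj q x ∧ G.Adj p y ∧ G.Adj q y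
  have Esymm : ∀ x y, E x y → E y x := by
    rintro x y ⟨p, q, h1, h2, h3, h4, h5⟩
    exact ⟨p, q, h1, h4, h5, h2, h3⟩
  have Eadj : ∀ x y, E x y → ¬ G.Adj x y := by
    rintro x y ⟨p, q, h1, h2, h3, h4, h5⟩ h
    exact hK p q x y h1 h2 h4 h3 h5 h
  have Eof : ∀ u x y, G.Adj u x → G.Adj u y → σ u x = σ u y → E x y := by
    intro u x y hx hy h
    obtain ⟨w, h1, h2, h3⟩ := L3e u x y hx hy h
    exact ⟨u, w, h1, hx, h2.symm, hy, h3.symm⟩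
  have bne : ∀ a b d : Bool, a ≠ b → a ≠ d → b = d := by decide
  have T : ∀ u x y, G.Adj u x → G.Adj u y → E x y → σ u x = σ u y := by
    rintro u x y hx hy ⟨p, q, pq, px, qx, py, qy⟩
    by_contra hne
    obtain ⟨s, us, xs⟩ := hex u x hx
    have h1 := hσ u x s hx us xs
    obtain ⟨t, ut, st, yt⟩ := L3e u s y us hy (bne _ _ _ h1 hne)
    refine L5 u x s t y p q ⟨_, hx⟩ ⟨_, hx.symm⟩ ⟨_, us.symm⟩ ⟨_, ut.symm⟩ ⟨_, hy.symm⟩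
      ⟨_, pq⟩ ⟨_, pq.symm⟩ ?_
    intro z
    have t1 := tri z u x s hx us xs
    have t2 := tri z u s t us ut st
    have t3 := tri z u t y ut hy yt.symm
    have t4 := tri z p q x pq px qx
    have t5 := tri z p q y pq py qy
    have c1 := cyc z x s t y q xs st yt.symm qy.symm qx
    have c2 := cyc z x s t y p xs st yt.symm py.symm px
    exact bash1 _ _ _ _ _ _ _ t1 t2 t3 t4 t5 c1 c2
  have LS : ∀ x y z, E x y → E y z → ¬ G.Adj x z := by
    have main : ∀ x y z p q p' q', G.Adj p q → G.Adj p x → G.Adj q x → G.Adj p y → G.Adj q y →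
        G.Adj p' q' → G.Adj p' y → G.Adj q' y → G.Adj p' z → G.Adj q' z →
        σ y p = σ y p' → ¬ G.Adj x z := by
      intro x y z p q p' q0 pq px qx py qy pq' py' qy' pz' qz' hs xz
      have e1 : σ p' y = σ p' z := T p' y z py' pz' ⟨p', q0, pq', py', qy', pz', qz'⟩
      have h1 := L3 p' y z py' pz' e1
      have h2 := hcod y p py.symm
      have h3 := hsub y p py.symm
      have h4 : (N p' ∩ N y) ∩ (N p' ∩ N z) ⊆ A y (!σ y p) := by
        rw [hs]
        refine Subset.trans ?_ (hsub y p' py'.symm)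
        intro w hw
        simp only [mem_inter] at hw ⊢
        tauto
      have h5 := inter_ge _ _ _ h3 h4
      have h6 := hAlt y p py.symm (!σ y p)
      have h7 : 0 < #((N y ∩ N p) ∩ ((N p' ∩ N y) ∩ (N p' ∩ N z))) := by
        simp only [N] at *
        omega
      obtain ⟨q', hq⟩ := card_pos.1 h7
      simp only [mem_inter, mN] at hq
      obtain ⟨⟨yq', pq2⟩, ⟨pq3, -⟩, -, zq'⟩ := hq
      refine L5 y q p q' p' z x ⟨_, qy.symm⟩ ⟨_, qy⟩ ⟨_, py⟩ ⟨_, yq'.symm⟩ ⟨_, py'⟩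
        ⟨_, xz.symm⟩ ⟨_, xz⟩ ?_
      intro w
      have t1 := tri w y q p qy.symm py.symm pq.symm
      have t2 := tri w y p q' py.symm yq' pq2
      have t3 := tri w y q' p' yq' py'.symm pq3.symm
      have t4 := tri w z q' p' zq' pz'.symm pq3.symm
      have t5 := tri w x q p qx.symm px.symm pq.symm
      have c1 := cyc w y q x z p' qy.symm qx xz pz'.symm py'
      have c2 := cyc w y q x z q' qy.symm qx xz zq' yq'.symm
      have c3 := cyc w y p x z p' py.symm px xz pz'.symm py'
      exact bash2 _ _ _ _ _ _ _ t1 t2 t3 t4 t5 c1 c2 c3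
    rintro x y z ⟨p, q, pq, px, qx, py, qy⟩ ⟨p', q', pq', py', qy', pz', qz'⟩
    by_cases hs : σ y p = σ y p'
    · exact main x y z p q p' q' pq px qx py qy pq' py' qy' pz' qz' hs
    · refine main x y z p q q' p' pq px qx py qy pq'.symm qy' py' qz' pz' ?_
      have := hσ y p' q' py'.symm qy'.symm pq'
      exact bne _ _ _ (Ne.symm hs) this
  have Etrans : ∀ x y z, E x y → E y z → E x z := by
    intro x y z hxy hyz
    obtain ⟨p, q, pq, px, qx, py, qy⟩ := id hxy
    obtain ⟨p', q', pq', py', qy', pz', qz'⟩ := id hyz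
    obtain ⟨u, ux, uz⟩ := L4 x z p p' px.symm pz'.symm
    by_cases hs : σ u x = σ u z
    · exact Eof u x z ux uz hs
    exfalso
    have d1 : Disjoint (N u ∩ N x) (N u ∩ N z) := by
      rw [disjoint_left]
      intro w hw hw'
      simp only [mem_inter, mN] at hw hw'
      have h1 := hσ u x w ux hw.1 hw.2
      have h2 := hσ u z w uz hw.1 hw'.2
      exact hs (bne _ _ _ h1.symm h2.symm)
    have d2 : Disjoint ((N u ∩ N x) ∪ (N u ∩ N z)) (N y) := by
      rw [disjoint_left]
      intro s hw hw'
      simp only [mem_union, mem_inter, mN] at hw hw'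
      rcases hw with ⟨us, xs⟩ | ⟨us, zs⟩
      · have h1 := hσ u x s ux us xs
        have h2 := Eof u z s uz us (bne _ _ _ hs h1)
        exact LS y z s hyz h2 hw'
      · have h1 := hσ u z s uz us zs
        have h2 := Eof u x s ux us (bne _ _ _ (Ne.symm hs) h1)
        exact LS y x s (Esymm _ _ hxy) h2 hw'
    have h1 := card_union_of_disjoint d1
    have h2 := card_union_of_disjoint d2
    have h3 := card_le_univ (((N u ∩ N x) ∪ (N u ∩ N z)) ∪ N y)
    have h4 := hcod u x ux
    have h5 := hcod u z uz
    have h6 := hdeg2 y p py.symm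
    simp only [N] at *
    omega
  by_cases hne : ∃ a b, G.Adj a b
  swap
  · push Not at hne
    exact ⟨fun _ => 0, fun a b h => absurd h (hne a b)⟩
  obtain ⟨a, b, ab⟩ := hne
  obtain ⟨d, ad, bd⟩ := hex a b ab
  have aux : ∀ b d u x, G.Adj a b → G.Adj a d → G.Adj b d → G.Adj u a → G.Adj u x →
      σ u x ≠ σ u a → σ a u = σ a b → E x d := by
    intro b d u x ab ad bd ua ux hs h
    obtain ⟨w, aw, uw, bw⟩ := L3e a u b ua.symm ab h
    have h1 : E w d := Eof a w d aw ad (bne _ _ _ (hσ a b w ab aw bw) (hσ a b d ab ad bd))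
    have h2 : E x w := Eof u x w ux uw (bne _ _ _ hs.symm (hσ u a w ua uw aw))
    exact Etrans _ _ _ h2 h1
  have cover : ∀ x y, G.Adj x y → E x a ∨ E x b ∨ E x d := by
    intro x y xy
    obtain ⟨u, ux, ua⟩ := L4 x a y b xy ab
    by_cases hs : σ u x = σ u a
    · exact Or.inl (Eof u x a ux ua hs)
    by_cases h : σ a u = σ a b
    · exact Or.inr (Or.inr (aux b d u x ab ad bd ua ux hs h))
    · refine Or.inr (Or.inl (aux d b u x ad ab bd.symm ua ux hs ?_))
      exact bne _ _ _ (Ne.symm h) (hσ a b d ab ad bd)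
  refine ⟨fun x => if E x a then 0 else if E x b then 1 else 2, ?_⟩
  intro x y xy hf
  have hE : ∀ w, E x w → E y w → False := fun w h1 h2 =>
    Eadj x y (Etrans _ _ _ h1 (Esymm _ _ h2)) xy
  have cx := cover x y xy
  have cy := cover y x xy.symm
  have e1 := hE a
  have e2 := hE b
  have e3 := hE d
  by_cases k1 : E x a <;> by_cases k2 : E x b <;> by_cases k3 : E y a <;> by_cases k4 : E y b <;>
    simp [k1, k2, k3, k4] at hf cx cy e1 e2 e3 <;> exact e3 cx cy

theorem stmt15 {V : Type*} [Fintype V] [DecidableEq V] {n : ℕ} (hn : 7 ≤ n)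
    (hV : Fintype.card V = n)
    {H : Finset (Finset V)} (hH : ∀ E ∈ H, E.card = 3)
    (hK4 : ¬ ∃ S : Finset V, S.card = 4 ∧
      ∀ a ∈ S, ∀ b ∈ S, a ≠ b → ({a, b} : Finset V) ∈ sshadow 3 H)
    (hdeg : ∀ e ∈ sshadow 3 H, 2 * (n : ℝ) / 7 < ((nbhd H e).card : ℝ)) :
    IsRPartite 3 H := by
  classical
  let G : SimpleGraph V :=
    { Adj := fun a b => a ≠ b ∧ ({a, b} : Finset V) ∈ sshadow 3 H
      symm := ⟨fun a b h => ⟨h.1.symm, by rw [Finset.pair_comm]; exact h.2⟩⟩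
      loopless := ⟨fun a h => h.1 rfl⟩ }
  have adjE : ∀ E ∈ H, ∀ a ∈ E, ∀ b ∈ E, a ≠ b → G.Adj a b := by
    intro E hE a ha b hb hab
    refine ⟨hab, ?_⟩
    simp only [sshadow, Finset.mem_filter, Finset.mem_univ, true_and]
    refine ⟨Finset.card_pair hab, E, hE, ?_⟩
    intro z hz
    simp only [Finset.mem_insert, Finset.mem_singleton] at hz
    rcases hz with rfl | rfl <;> assumption
  obtain ⟨f, hf⟩ := aux_color G (2 * n / 7 + 1) (by rw [hV]; omega)
    (by
      intro a b d e h1 h2 h3 h4 h5 h6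
      apply hK4
      refine ⟨{a, b, d, e}, ?_, ?_⟩
      · rw [Finset.card_insert_of_notMem, Finset.card_insert_of_notMem, Finset.card_pair h6.1]
        · simp [h4.1, h5.1]
        · simp [h1.1, h2.1, h3.1]
      · intro x hx y hy hxy
        suffices G.Adj x y from this.2
        simp only [Finset.mem_insert, Finset.mem_singleton] at hx hy
        rcases hx with rfl | rfl | rfl | rfl <;> rcases hy with rfl | rfl | rfl | rfl <;>
          first | exact absurd rfl hxy | assumption | (apply SimpleGraph.Adj.symm; assumption))
    (by
      intro a b hab
      have h1 := hdeg _ hab.2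
      have h2 : 2 * n < 7 * (nbhd H {a, b}).card := by
        have : (2 * n : ℝ) < 7 * ((nbhd H {a, b}).card : ℝ) := by linarith
        exact_mod_cast this
      have h3 : nbhd H {a, b} ⊆ G.neighborFinset a ∩ G.neighborFinset b := by
        intro z hz
        simp only [nbhd, Finset.mem_filter, Finset.mem_univ, true_and] at hz
        have h4 := hH _ hz
        have hz' : z ∉ ({a, b} : Finset V) := by
          intro hz'
          rw [Finset.insert_eq_of_mem hz', Finset.card_pair hab.1] at h4
          omega
        simp only [Finset.mem_insert, Finset.mem_singleton, not_or] at hz'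
        simp only [Finset.mem_inter, SimpleGraph.mem_neighborFinset]
        exact ⟨adjE _ hz a (by simp) z (by simp) (Ne.symm hz'.1),
          adjE _ hz b (by simp) z (by simp) (Ne.symm hz'.2)⟩
      have := Finset.card_le_card h3
      omega)
  refine ⟨fun i => Finset.univ.filter (fun v => f v = i), ?_, ?_⟩
  · intro v
    refine ⟨f v, by simp, ?_⟩
    intro j hj
    have hj' : f v = j := by simpa using hj
    exact hj'.symm
  · intro i E hE
    rw [Finset.card_le_one]
    intro x hx y hy
    simp only [Finset.mem_inter, Finset.mem_filter, Finset.mem_univ, true_and] at hx hy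
    by_contra hxy
    exact hf x y (adjE E hE x hx.1 y hy.1 hxy) (hx.2.trans hy.2.symm)
end

section
/- Let r ≥ 3 and n ≥ r be integers. The complete balanced r-partite r-graph on n vertices (vertex set partitioned into r parts of sizes as equal as possible, edges being all r-sets meeting every part in exactly one vertex) is T_r-free and has minimum positive codegree δ⁺_{r-1} equal to ⌊n/r⌋. In particular, co⁺ex(n, T_r) ≥ ⌊n/r⌋. -/
variable {V : Type*} [Fintype V] [DecidableEq V]

/-- The complete balanced r-partite r-graph on vertex set `Fin n`, with parts given by
residues modulo `r` (so part sizes are as equal as possible): edges are all sets meeting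
each part in exactly one vertex. -/
def balancedRPartite (r n : ℕ) : Finset (Finset (Fin n)) :=
  Finset.univ.filter (fun E =>
    ∀ i, i < r → (E.filter (fun v : Fin n => (v : ℕ) % r = i)).card = 1)

lemma mem_bal {r n : ℕ} {E : Finset (Fin n)} : E ∈ balancedRPartite r n ↔
    ∀ i, i < r → ∃ a ∈ E, (a : ℕ) % r = i ∧ ∀ b ∈ E, (b : ℕ) % r = i → b = a := by
  simp only [balancedRPartite, Finset.mem_filter, Finset.mem_univ, true_and,
    Finset.card_eq_one]
  refine forall_congr' fun i => forall_congr' fun hi => ⟨?_, ?_⟩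
  · rintro ⟨a, ha⟩
    have h : ∀ b, (b ∈ E ∧ (b : ℕ) % r = i) ↔ b = a := by
      intro b
      have := congrArg (b ∈ ·) ha
      simpa using this
    exact ⟨a, ((h a).2 rfl).1, ((h a).2 rfl).2, fun b hb hb' => (h b).1 ⟨hb, hb'⟩⟩
  · rintro ⟨a, ha, hai, h⟩
    refine ⟨a, ?_⟩
    ext b
    simp only [Finset.mem_filter, Finset.mem_singleton]
    exact ⟨fun hb => h b hb.1 hb.2, fun hb => by subst hb; exact ⟨ha, hai⟩⟩

lemma bal_inj {r n : ℕ} (hr : 0 < r) {E : Finset (Fin n)} (hE : E ∈ balancedRPartite r n)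
    {a b : Fin n} (ha : a ∈ E) (hb : b ∈ E) (h : (a : ℕ) % r = (b : ℕ) % r) : a = b := by
  obtain ⟨c, _, _, hc⟩ := mem_bal.1 hE ((a : ℕ) % r) (Nat.mod_lt _ hr)
  rw [hc a ha rfl, hc b hb h.symm]

lemma bal_card {r n : ℕ} (hr : 0 < r) {E : Finset (Fin n)} (hE : E ∈ balancedRPartite r n) :
    E.card = r := by
  have h := Finset.card_eq_sum_card_fiberwise (s := E) (t := Finset.range r)
    (f := fun v : Fin n => (v : ℕ) % r) (fun v _ => by simpa using Nat.mod_lt _ hr)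
  simp only [balancedRPartite, Finset.mem_filter, Finset.mem_univ, true_and] at hE
  rw [h, Finset.sum_congr rfl (fun i hi => hE i (Finset.mem_range.1 hi))]
  simp

lemma bal_free {r n : ℕ} (hr : 0 < r) : IsTrFree r (balancedRPartite r n) := by
  rintro ⟨S, W, a, b, _, _, hab, haS, hbS, _, _, _, h1, h2, h3⟩
  refine hab (bal_inj hr h3 (by simp) (by simp) ?_)
  obtain ⟨c, hc, hci, _⟩ := mem_bal.1 h2 ((a : ℕ) % r) (Nat.mod_lt _ hr)
  rcases Finset.mem_insert.1 hc with rfl | hc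
  · exact hci.symm
  · have := bal_inj hr h1 (Finset.mem_insert_of_mem hc) (Finset.mem_insert_self a S) hci
    exact absurd (this ▸ hc) haS

lemma bal_nbhd {r n : ℕ} (hr : 0 < r) {E : Finset (Fin n)} (hE : E ∈ balancedRPartite r n)
    {x : Fin n} (hx : x ∈ E) : nbhd (balancedRPartite r n) (E.erase x) =
      Finset.univ.filter (fun v : Fin n => (v : ℕ) % r = (x : ℕ) % r) := by
  ext v
  simp only [nbhd, Finset.mem_filter, Finset.mem_univ, true_and]
  constructor
  · intro h
    obtain ⟨c, hc, hci, _⟩ := mem_bal.1 h ((x : ℕ) % r) (Nat.mod_lt _ hr)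
    rcases Finset.mem_insert.1 hc with rfl | hc
    · exact hci
    · exact absurd (bal_inj hr hE (Finset.mem_of_mem_erase hc) hx hci) (Finset.ne_of_mem_erase hc)
  · intro h
    rw [mem_bal]
    intro i hi
    obtain ⟨c, hc, hci, hu⟩ := mem_bal.1 hE i hi
    by_cases hcx : c = x
    · subst hcx
      refine ⟨v, Finset.mem_insert_self _ _, h.trans hci, fun b hb hbi => ?_⟩
      rcases Finset.mem_insert.1 hb with rfl | hb
      · rfl
      · exact absurd (hu b (Finset.mem_of_mem_erase hb) hbi) (Finset.ne_of_mem_erase hb)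
    · refine ⟨c, Finset.mem_insert_of_mem (Finset.mem_erase.2 ⟨hcx, hc⟩), hci, fun b hb hbi => ?_⟩
      rcases Finset.mem_insert.1 hb with rfl | hb
      · exact absurd (hu x hx (h.symm.trans hbi)).symm hcx
      · exact hu b (Finset.mem_of_mem_erase hb) hbi

lemma part_card {r n : ℕ} (hr : 0 < r) (j : ℕ) :
    (Finset.univ.filter (fun v : Fin n => (v : ℕ) % r = j % r)).card =
      n / r + if j % r < n % r then 1 else 0 := by
  rw [← Nat.count_modEq_card n hr j, Nat.count_eq_card_filter_range,
    ← Finset.card_map Fin.valEmbedding]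
  refine congrArg Finset.card (Finset.ext fun k => ?_)
  rw [Finset.mem_map, Finset.mem_filter, Finset.mem_range]
  constructor
  · rintro ⟨a, ha, rfl⟩
    exact ⟨a.2, (Finset.mem_filter.1 ha).2⟩
  · rintro ⟨h, h'⟩
    exact ⟨⟨k, h⟩, Finset.mem_filter.2 ⟨Finset.mem_univ _, h'⟩, rfl⟩

lemma bal_codeg {r n : ℕ} (hr : 0 < r) (hn : r ≤ n) :
    minPosCodeg r (balancedRPartite r n) = n / r := by
  have hmem : n / r ∈ {k | ∃ e ∈ sshadow r (balancedRPartite r n),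
      (nbhd (balancedRPartite r n) e).card = k} := by
    let E : Finset (Fin n) := Finset.univ.filter (fun v : Fin n => (v : ℕ) < r)
    have hE : E ∈ balancedRPartite r n := by
      rw [mem_bal]
      intro i hi
      refine ⟨⟨i, by omega⟩, by simpa [E] using hi, Nat.mod_eq_of_lt hi, fun b hb hbi => ?_⟩
      have hb' : (b : ℕ) < r := by simpa [E] using hb
      rw [Nat.mod_eq_of_lt hb'] at hbi
      exact Fin.ext hbi
    have hx : (⟨r - 1, by omega⟩ : Fin n) ∈ E := by
      simp only [E, Finset.mem_filter, Finset.mem_univ, true_and]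
      omega
    refine ⟨E.erase ⟨r - 1, by omega⟩, ?_, ?_⟩
    · simp only [sshadow, Finset.mem_filter, Finset.mem_univ, true_and]
      exact ⟨by rw [Finset.card_erase_of_mem hx, bal_card hr hE], E, hE, Finset.erase_subset _ _⟩
    · rw [bal_nbhd hr hE hx, part_card hr, if_neg, add_zero]
      have := Nat.mod_lt n hr
      rw [Nat.mod_eq_of_lt (show r - 1 < r by omega)]
      omega
  refine le_antisymm (Nat.sInf_le hmem) (le_csInf ⟨_, hmem⟩ ?_)
  rintro k ⟨e, he, rfl⟩
  simp only [sshadow, Finset.mem_filter, Finset.mem_univ, true_and] at he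
  obtain ⟨hc, E, hE, heE⟩ := he
  have hEc := bal_card hr hE
  have h1 : (E \ e).card = 1 := by
    rw [Finset.card_sdiff_of_subset heE]; omega
  obtain ⟨x, hx⟩ := Finset.card_eq_one.1 h1
  have hxE : x ∈ E \ e := by rw [hx]; simp
  have hee : e = E.erase x := by
    rw [← Finset.sdiff_singleton_eq_erase, ← hx, Finset.sdiff_sdiff_eq_self heE]
  rw [hee, bal_nbhd hr hE (Finset.mem_sdiff.1 hxE).1, part_card hr]
  omega

/-- For `r ≥ 3` and `n ≥ r`, the complete balanced `r`-partite `r`-graph on `n` vertices is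
an `r`-graph which is `T_r`-free and has minimum positive codegree exactly `⌊n/r⌋`. In
particular, the positive codegree Turán number of `T_r` is at least `⌊n/r⌋`. -/
theorem stmt16 {r n : ℕ} (hr : 3 ≤ r) (hn : r ≤ n) :
    (∀ E ∈ balancedRPartite r n, E.card = r) ∧
    IsTrFree r (balancedRPartite r n) ∧
    minPosCodeg r (balancedRPartite r n) = n / r ∧
    ∃ H : Finset (Finset (Fin n)),
      (∀ E ∈ H, E.card = r) ∧ IsTrFree r H ∧ n / r ≤ minPosCodeg r H := by
  have h0 : 0 < r := by omega
  exact ⟨fun E hE => bal_card h0 hE, bal_free h0, bal_codeg h0 hn, balancedRPartite r n,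
    fun E hE => bal_card h0 hE, bal_free h0, (bal_codeg h0 hn).ge⟩
end
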